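/- arXiv:2311.07543 — 4 statements merged into one kernel-verified Lean document; each statement's English description precedes it below -/
import Mathlib

section
/- For all i, j, k, l ∈ {1,…,n}, the following identities of operators on L hold: E^q_{ij}E^q_{kl} − E^q_{il}E^q_{kj} = E^q_{il}S^q_{jk} − E^q_{ij}S^q_{lk}, and E^q_{ij}E^q_{kl} − E^q_{kj}E^q_{il} = S^q_{jk}E^q_{il} − S^q_{ji}E^q_{kl}. -/
noncomputable section

/-- The Laurent polynomial ring `R[X₁^{±1}, …, Xₙ^{±1}]` in `n` variables over `R`,
realised as the monoid algebra of the additive monoid `Fin n →₀ ℤ` of exponent vectors. -/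
abbrev Laur (R : Type*) [CommRing R] (n : ℕ) : Type _ :=
  AddMonoidAlgebra R (Fin n →₀ ℤ)

variable {R : Type*} [CommRing R] {n : ℕ}

/-- The monomial `c · X^a`. -/
def mono (a : Fin n →₀ ℤ) (c : R) : Laur R n := AddMonoidAlgebra.single a c

/-- The generator `X_i`. -/
def Xel (i : Fin n) : Laur R n := mono (Finsupp.single i 1) 1

/-- The element `X_i⁻¹`. -/
def XinvEl (i : Fin n) : Laur R n := mono (Finsupp.single i (-1)) 1

/-- Multiplication by a Laurent polynomial, as a linear endomorphism. -/
def mulOp (x : Laur R n) : Module.End R (Laur R n) := LinearMap.mulLeft R x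

/-- The operator of multiplication by `X_i`, with `ℕ`-indexing (`0`-based; junk value `1`
out of range). -/
def XOp (i : ℕ) : Module.End R (Laur R n) :=
  if h : i < n then mulOp (Xel ⟨i, h⟩) else 1

/-- The operator of multiplication by `X_i⁻¹`, with `ℕ`-indexing. -/
def XinvOp (i : ℕ) : Module.End R (Laur R n) :=
  if h : i < n then mulOp (XinvEl ⟨i, h⟩) else 1

/-- Ascending product `f s * f (s+1) * ⋯ * f (s+len-1)` (equal to `1` when `len = 0`). -/
def aF {M : Type*} [Monoid M] (f : ℕ → M) (s len : ℕ) : M :=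
  ((List.range' s len).map f).prod

/-- Descending product `f (s+len-1) * ⋯ * f (s+1) * f s` (equal to `1` when `len = 0`). -/
def dF {M : Type*} [Monoid M] (f : ℕ → M) (s len : ℕ) : M :=
  (((List.range' s len).map f).reverse).prod

/-- Integer power `u^z`, where `v` is a designated (two-sided) inverse of `u`. -/
def zpowOp {M : Type*} [Monoid M] (u v : M) (z : ℤ) : M :=
  if 0 ≤ z then u ^ z.toNat else v ^ (-z).toNat

/-- The quadratic relations among the operators `E^q_{ij} = X_i d_j`
on the Laurent polynomial ring, with `S^q_{ij} = [d_i, X_j]`. -/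
theorem statement0
    (F : Type*) [Field F] (n : ℕ) [NeZero n]
    (q : F) (hq : q ≠ 0) (hqroot : ∀ m : ℕ, m ≠ 0 → q ^ m ≠ 1)
    -- the q-shift operators `t_i` and their inverses
    (t ti : Fin n → Module.End F (Laur F n))
    (ht : ∀ (i : Fin n) (a : Fin n →₀ ℤ) (c : F), t i (mono a c) = q ^ (a i) • mono a c)
    (hti : ∀ (i : Fin n) (a : Fin n →₀ ℤ) (c : F), ti i (mono a c) = q ^ (-(a i)) • mono a c)
    -- the operators `d_i = (q - q⁻¹)⁻¹ X_i⁻¹ (t_i - t_i⁻¹)`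
    (d : Fin n → Module.End F (Laur F n))
    (hd : ∀ i, d i = (q - q⁻¹)⁻¹ • (mulOp (XinvEl i) * (t i - ti i)))
    -- the operators `E^q_{ij} = X_i · d_j`
    (E : Fin n → Fin n → Module.End F (Laur F n))
    (hE : ∀ i j, E i j = mulOp (Xel i) * d j)
    -- the operators `S^q_{ij} = [d_i, X_j]`
    (S : Fin n → Fin n → Module.End F (Laur F n))
    (hS : ∀ i j, S i j = d i * mulOp (Xel j) - mulOp (Xel j) * d i)
    :
    ∀ i j k l : Fin n,
      (E i j * E k l - E i l * E k j = E i l * S j k - E i j * S l k) ∧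
      (E i j * E k l - E k j * E i l = S j k * E i l - S j i * E k l) := by
  have hdm : ∀ (i : Fin n) (a : Fin n →₀ ℤ) (c : F), d i (mono a c) =
      mono (Finsupp.single i (-1) + a) ((q - q⁻¹)⁻¹ * ((q ^ (a i) - q ^ (-(a i))) * c)) := by
    intro i a c
    rw [hd]
    simp only [LinearMap.smul_apply, Module.End.mul_apply, LinearMap.sub_apply, ht, hti]
    rw [← sub_smul]
    simp only [mulOp, XinvEl, mono, LinearMap.mulLeft_apply, AddMonoidAlgebra.smul_single,
      AddMonoidAlgebra.single_mul_single, smul_eq_mul, one_mul]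
  have hdc : ∀ i j, d i * d j = d j * d i := by
    intro i j
    by_cases hij : i = j
    · rw [hij]
    · refine AddMonoidAlgebra.lhom_ext' (fun a => LinearMap.ext fun c => ?_)
      change d i (d j (mono a c)) = d j (d i (mono a c))
      simp only [hdm]
      have hji : ¬ j = i := fun h => hij h.symm
      simp only [Finsupp.add_apply, Finsupp.single_apply, hij, hji, if_false, zero_add]
      rw [add_left_comm]
      congr 1
      ring
  have hXc : ∀ i j : Fin n, (mulOp (Xel i) * mulOp (Xel j) : Module.End F (Laur F n))
      = mulOp (Xel j) * mulOp (Xel i) := by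
    intro i j
    ext1 x
    simp only [mulOp, LinearMap.mulLeft_mul, Module.End.mul_eq_comp, ← LinearMap.mulLeft_mul,
      mul_comm]
  intro i j k l
  simp only [hE, hS]
  constructor
  · have h : mulOp (Xel i) * (d l * d j) * mulOp (Xel k)
        = mulOp (Xel i) * (d j * d l) * mulOp (Xel k) := by rw [hdc]
    simp only [mul_sub, sub_mul, mul_assoc] at h ⊢
    rw [h]
    abel
  · have h : d j * (mulOp (Xel k) * mulOp (Xel i)) * d l
        = d j * (mulOp (Xel i) * mulOp (Xel k)) * d l := by rw [hXc]
    simp only [mul_sub, sub_mul, mul_assoc] at h ⊢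
    rw [h]
    abel
end
end

section
/- An element f ∈ A commutes with every element of A if and only if f is a ℂ-linear combination of the operators (t_1t_2⋯t_n)^m with m ∈ ℤ; that is, the centre of A is the subalgebra generated by t_1t_2⋯t_n and its inverse. -/
noncomputable section

variable {R : Type*} [CommRing R] {n : ℕ}

/-- The generating set of the algebra `A`: the operators `t_i`, `t_i⁻¹` and
`E^q_{ij}` for `i ≠ j`. -/
def qGenSet {F : Type*} [Field F] {n : ℕ} (t ti : Fin n → Module.End F (Laur F n))
    (E : Fin n → Fin n → Module.End F (Laur F n)) : Set (Module.End F (Laur F n)) :=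
  {f | (∃ i, f = t i) ∨ (∃ i, f = ti i) ∨ (∃ i j, i ≠ j ∧ f = E i j)}

/-! ### Auxiliary material for the proof -/

section aux

variable {F : Type*} [Field F]

/-- The character `a ↦ q ^ ⟨c, a⟩`. -/
def phi (q : F) (c a : Fin n →₀ ℤ) : F := q ^ (∑ i, c i * a i)

/-- The operator `X^a ↦ q ^ ⟨c, a⟩ X^(a+b)`. -/
def Op (q : F) (b c : Fin n →₀ ℤ) : Module.End F (Laur F n) where
  toFun x := AddMonoidAlgebra.ofCoeff
    (Finsupp.lsum F (fun a => phi q c a • Finsupp.lsingle (R := F) (M := F) (a + b)) x.coeff)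
  map_add' x y := by simp only [AddMonoidAlgebra.coeff_add, map_add, AddMonoidAlgebra.ofCoeff_add]
  map_smul' r x := by
    simp only [AddMonoidAlgebra.coeff_smul, map_smul, AddMonoidAlgebra.ofCoeff_smul, RingHom.id_apply]

lemma smul_mono (a : Fin n →₀ ℤ) (r x : F) : r • mono a x = mono a (r * x) := by
  simp [mono]

lemma Op_mono (q : F) (b c a : Fin n →₀ ℤ) (x : F) :
    Op q b c (mono a x) = mono (a + b) (phi q c a * x) := by
  change AddMonoidAlgebra.ofCoeff (Finsupp.lsum F _ (Finsupp.single a x)) = _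
  rw [Finsupp.lsum_single, LinearMap.smul_apply, Finsupp.lsingle_apply, Finsupp.smul_single]
  rfl

lemma ext_mono {f g : Module.End F (Laur F n)} (h : ∀ a, f (mono a 1) = g (mono a 1)) : f = g := by
  refine LinearMap.ext fun x => ?_
  induction x using AddMonoidAlgebra.induction_linear with
  | zero => simp
  | add x y hx hy => simp [hx, hy]
  | single a r =>
    have := congrArg (fun z => r • z) (h a)
    simpa [← map_smul, smul_mono, mono] using this

variable {q : F}

lemma phi_add_left (hq : q ≠ 0) (c c' a : Fin n →₀ ℤ) :
    phi q (c + c') a = phi q c a * phi q c' a := by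
  simp [phi, add_mul, Finset.sum_add_distrib, zpow_add₀ hq]

lemma phi_add_right (hq : q ≠ 0) (c a a' : Fin n →₀ ℤ) :
    phi q c (a + a') = phi q c a * phi q c a' := by
  simp [phi, mul_add, Finset.sum_add_distrib, zpow_add₀ hq]

lemma phi_zero_right (c : Fin n →₀ ℤ) : phi q c 0 = 1 := by simp [phi]

lemma phi_single_left (i : Fin n) (k : ℤ) (a : Fin n →₀ ℤ) :
    phi q (Finsupp.single i k) a = q ^ (k * a i) := by
  unfold phi
  rw [Finset.sum_eq_single i] <;> simp +contextual [eq_comm]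

lemma phi_single_right (i : Fin n) (k : ℤ) (c : Fin n →₀ ℤ) :
    phi q c (Finsupp.single i k) = q ^ (c i * k) := by
  unfold phi
  rw [Finset.sum_eq_single i] <;> simp +contextual [eq_comm]

lemma phi_ne_zero (hq : q ≠ 0) (c a : Fin n →₀ ℤ) : phi q c a ≠ 0 := zpow_ne_zero _ hq

lemma Op_mul (hq : q ≠ 0) (b c b' c' : Fin n →₀ ℤ) :
    Op q b c * Op q b' c' = phi q c b' • Op q (b + b') (c + c') := by
  refine ext_mono fun a => ?_
  simp only [Module.End.mul_apply, Op_mono, LinearMap.smul_apply, smul_mono,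
    phi_add_left hq, phi_add_right hq]
  rw [add_assoc a b' b, add_comm b' b]
  congr 1
  ring

lemma Op_zero : Op q (0 : Fin n →₀ ℤ) 0 = 1 := by
  refine ext_mono fun a => ?_
  simp [Op_mono, phi]

lemma Op_diag_mul (hq : q ≠ 0) (c c' : Fin n →₀ ℤ) :
    Op q 0 c * Op q 0 c' = Op q 0 (c + c') := by
  simp [Op_mul hq, phi_zero_right]

lemma Op_diag_pow (hq : q ≠ 0) (c : Fin n →₀ ℤ) (k : ℕ) :
    (Op q 0 c) ^ k = Op q 0 (k • c) := by
  induction k with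
  | zero => simp [Op_zero]
  | succ k ih => rw [pow_succ, ih, Op_diag_mul hq, succ_nsmul]

lemma Op_list_prod (hq : q ≠ 0) (v : Fin n → (Fin n →₀ ℤ)) (l : List (Fin n)) :
    (l.map fun i => Op q 0 (v i)).prod = Op q 0 (l.map v).sum := by
  induction l with
  | nil => simp [Op_zero]
  | cons i l ih => simp [ih, Op_diag_mul hq]

/-- The all-ones vector. -/
def ones (n : ℕ) : Fin n →₀ ℤ := ∑ i, Finsupp.single i 1

lemma ones_apply (i : Fin n) : ones n i = 1 := by
  simp [ones, Finsupp.finsetSum_apply, Finsupp.single_apply]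

lemma zpow_inj_root (hq : q ≠ 0) (hqroot : ∀ m : ℕ, m ≠ 0 → q ^ m ≠ 1) {k l : ℤ}
    (h : q ^ k = q ^ l) : k = l := by
  have key : ∀ m : ℤ, q ^ m = 1 → m = 0 := by
    intro m hm
    by_contra hne
    apply hqroot m.natAbs (by omega)
    rcases Int.natAbs_eq m with h | h
    · rw [h] at hm; exact_mod_cast hm
    · rw [h, zpow_neg, inv_eq_one] at hm; exact_mod_cast hm
  have := key (k - l) (by rw [zpow_sub₀ hq, h, div_self (zpow_ne_zero _ hq)])
  omega

lemma coeff_Op_diag (c : Fin n →₀ ℤ) (x : Laur F n) (b : Fin n →₀ ℤ) :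
    (Op q 0 c x).coeff b = phi q c b * x.coeff b := by
  induction x using AddMonoidAlgebra.induction_linear with
  | zero => simp
  | add x y hx hy => simp [hx, hy, mul_add]
  | single a r =>
    have := Op_mono q 0 c a r
    unfold mono at this
    rw [this]
    by_cases h : a = b <;> simp [h]

/-- The diagonal part of an operator. -/
def lam : Module.End F (Laur F n) →ₗ[F] ((Fin n →₀ ℤ) → F) where
  toFun f a := (f (mono a 1)).coeff a
  map_add' f g := by ext a; simp
  map_smul' r f := by ext a; simp

lemma lam_Op (b c : Fin n →₀ ℤ) : lam (Op q b c) = if b = 0 then phi q c else 0 := by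
  ext a
  simp only [lam, LinearMap.coe_mk, AddHom.coe_mk, Op_mono]
  simp only [mono, AddMonoidAlgebra.coeff_single]
  split_ifs with h
  · simp [h]
  · simp [Finsupp.single_apply, h]

/-- Restriction of the character `phi q c` to the monoid `ℕ ^ n`. -/
def psi (hq : q ≠ 0) (c : Fin n →₀ ℤ) : Multiplicative (Fin n → ℕ) →* F where
  toFun a := q ^ (∑ i, c i * (a.toAdd i : ℤ))
  map_one' := by simp
  map_mul' a b := by simp [mul_add, Finset.sum_add_distrib, zpow_add₀ hq]

lemma psi_injective (hq : q ≠ 0) (hqroot : ∀ m : ℕ, m ≠ 0 → q ^ m ≠ 1) :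
    Function.Injective (psi (n := n) hq) := by
  intro c c' h
  ext i
  have := DFunLike.congr_fun h (Multiplicative.ofAdd (Pi.single i 1))
  apply zpow_inj_root hq hqroot
  simpa [psi, Pi.single_apply] using this

/-- A finite combination of characters that vanishes on the shifted orthant `e_j + ℕ ^ n` is
trivial. -/
lemma phi_indep (hq : q ≠ 0) (hqroot : ∀ m : ℕ, m ≠ 0 → q ^ m ≠ 1) (j : Fin n)
    (s : Finset (Fin n →₀ ℤ)) (r : (Fin n →₀ ℤ) → F)
    (h : ∀ a : Fin n →₀ ℤ, 0 < a j → ∑ c ∈ s, r c * phi q c a = 0) : ∀ c ∈ s, r c = 0 := by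
  have hli := (linearIndependent_monoidHom (Multiplicative (Fin n → ℕ)) F).comp _
    (psi_injective (n := n) hq hqroot)
  rw [linearIndependent_iff'] at hli
  intro c hc
  have := hli s (fun c => r c * q ^ (c j)) ?_ c hc
  · exact (mul_eq_zero.1 this).resolve_right (zpow_ne_zero _ hq)
  · ext a
    have h1 := h (Finsupp.equivFunOnFinite.symm (fun i => (a.toAdd i : ℤ)) + Finsupp.single j 1)
      (by simp)
    simp only [phi_add_right hq, phi_single_right, mul_one] at h1
    simp only [Finset.sum_apply, Pi.smul_apply, smul_eq_mul, Function.comp, Pi.zero_apply]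
    rw [← h1]
    refine Finset.sum_congr rfl fun c _ => ?_
    simp only [psi, phi, MonoidHom.coe_mk, OneHom.coe_mk, Finsupp.equivFunOnFinite_symm_apply_apply]
    ring

lemma zpowOp_eq (hq : q ≠ 0) (m : ℤ) :
    zpowOp (((List.finRange n).map fun i => Op q 0 (Finsupp.single i 1)).prod)
      ((((List.finRange n).map fun i => Op q 0 (Finsupp.single i (-1))).reverse).prod) m
      = Op q 0 (m • ones n) := by
  have h1 : (((List.finRange n).map fun i => (Finsupp.single i 1 : Fin n →₀ ℤ))).sum = ones n := by
    rw [← List.ofFn_eq_map, List.sum_ofFn, ones]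
  have h2 : (((List.finRange n).map fun i => (Finsupp.single i (-1) : Fin n →₀ ℤ))).sum
      = - ones n := by
    rw [← List.ofFn_eq_map, List.sum_ofFn, ones]
    simp
  rw [← List.map_reverse, Op_list_prod hq, Op_list_prod hq, List.map_reverse, List.sum_reverse,
    h1, h2, zpowOp]
  split_ifs with h
  · rw [Op_diag_pow hq]
    congr 1
    rw [← natCast_zsmul, Int.toNat_of_nonneg h]
  · rw [Op_diag_pow hq]
    congr 1
    rw [← natCast_zsmul, Int.toNat_of_nonneg (by omega)]
    simp

end aux

/-- The centre of the algebra `A`: an element `f ∈ A` commutes with every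
element of `A` iff `f` is an `F`-linear combination of the operators `(t_1 ⋯ t_n)^m`, `m ∈ ℤ`. -/
theorem statement2
    (F : Type*) [Field F] (n : ℕ) [NeZero n]
    (q : F) (hq : q ≠ 0) (hqroot : ∀ m : ℕ, m ≠ 0 → q ^ m ≠ 1)
    -- the q-shift operators `t_i` and their inverses
    (t ti : Fin n → Module.End F (Laur F n))
    (ht : ∀ (i : Fin n) (a : Fin n →₀ ℤ) (c : F), t i (mono a c) = q ^ (a i) • mono a c)
    (hti : ∀ (i : Fin n) (a : Fin n →₀ ℤ) (c : F), ti i (mono a c) = q ^ (-(a i)) • mono a c)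
    -- the operators `d_i = (q - q⁻¹)⁻¹ X_i⁻¹ (t_i - t_i⁻¹)`
    (d : Fin n → Module.End F (Laur F n))
    (hd : ∀ i, d i = (q - q⁻¹)⁻¹ • (mulOp (XinvEl i) * (t i - ti i)))
    -- the operators `E^q_{ij} = X_i · d_j`
    (E : Fin n → Fin n → Module.End F (Laur F n))
    (hE : ∀ i j, E i j = mulOp (Xel i) * d j)
    :
    ∀ f ∈ Algebra.adjoin F (qGenSet t ti E),
      ((∀ g ∈ Algebra.adjoin F (qGenSet t ti E), f * g = g * f) ↔
        f ∈ Submodule.span F (Set.range fun m : ℤ =>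
              zpowOp (((List.finRange n).map t).prod)
                ((((List.finRange n).map ti).reverse).prod) m)) := by
  obtain rfl : t = fun i => Op q 0 (Finsupp.single i 1) := by
    funext i
    refine ext_mono fun a => ?_
    rw [ht, Op_mono, phi_single_left, smul_mono]
    simp
  obtain rfl : ti = fun i => Op q 0 (Finsupp.single i (-1)) := by
    funext i
    refine ext_mono fun a => ?_
    rw [hti, Op_mono, phi_single_left, smul_mono]
    simp
  have hqq : q - q⁻¹ ≠ 0 := by
    intro h
    have h1 : q ^ (1 : ℤ) = q ^ (-1 : ℤ) := by simpa using sub_eq_zero.1 h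
    have := zpow_inj_root hq hqroot h1
    omega
  have hE' : ∀ i j, E i j = (q - q⁻¹)⁻¹ •
      (Op q (Finsupp.single i 1 - Finsupp.single j 1) (Finsupp.single j 1)
        - Op q (Finsupp.single i 1 - Finsupp.single j 1) (Finsupp.single j (-1))) := by
    intro i j
    refine ext_mono fun a => ?_
    have hb : ∀ x : F, Xel i * (XinvEl j * mono a x)
        = mono (a + (Finsupp.single i 1 - Finsupp.single j 1)) x := by
      intro x
      simp only [Xel, XinvEl, mono, AddMonoidAlgebra.single_mul_single, one_mul]
      congr 1
      rw [Finsupp.single_neg]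
      abel
    simp only [hE, hd, Module.End.mul_apply, LinearMap.smul_apply, LinearMap.sub_apply, Op_mono,
      mulOp, LinearMap.mulLeft_apply, mul_sub, mul_smul_comm, add_zero, hb]
  simp only [zpowOp_eq hq]
  intro f hf
  constructor
  · intro hcomm
    -- `f` is a combination of the operators `Op b c`
    have hspan : f ∈ Submodule.span F
        (Set.range fun p : (Fin n →₀ ℤ) × (Fin n →₀ ℤ) => Op q p.1 p.2) := by
      have hmem : ∀ b c : Fin n →₀ ℤ, Op q b c ∈ Submodule.span F
          (Set.range fun p : (Fin n →₀ ℤ) × (Fin n →₀ ℤ) => Op q p.1 p.2) :=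
        fun b c => Submodule.subset_span ⟨(b, c), rfl⟩
      clear hcomm
      induction hf using Algebra.adjoin_induction with
      | mem x hx =>
        rcases hx with ⟨i, rfl⟩ | ⟨i, rfl⟩ | ⟨i, j, -, rfl⟩
        · exact hmem _ _
        · exact hmem _ _
        · rw [hE']
          exact Submodule.smul_mem _ _ (Submodule.sub_mem _ (hmem _ _) (hmem _ _))
      | algebraMap r =>
        rw [Algebra.algebraMap_eq_smul_one, ← Op_zero (q := q)]
        exact Submodule.smul_mem _ _ (hmem _ _)
      | add x y _ _ hx hy => exact Submodule.add_mem _ hx hy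
      | mul x y _ _ hx hy =>
        have h1 := Submodule.mul_mem_mul hx hy
        rw [Submodule.span_mul_span] at h1
        refine (Submodule.span_le.2 ?_) h1
        rintro _ ⟨_, ⟨p, rfl⟩, _, ⟨p', rfl⟩, rfl⟩
        simp only [Op_mul hq]
        exact Submodule.smul_mem _ _ (hmem _ _)
    have hcoeff : ∀ a b, a ≠ b → (f (mono a 1)).coeff b = 0 := by
      intro a b hab
      obtain ⟨i, hi⟩ : ∃ i, a i ≠ b i := by
        by_contra! h
        exact hab (Finsupp.ext h)
      have h1 := hcomm _ (Algebra.subset_adjoin (Or.inl ⟨i, rfl⟩))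
      have h2 := congrArg (fun z => (z (mono a 1)).coeff b) h1
      simp only [Module.End.mul_apply, Op_mono, coeff_Op_diag, add_zero, ← smul_mono, map_smul,
        phi_single_left, one_mul, AddMonoidAlgebra.coeff_smul, Finsupp.smul_apply,
        smul_eq_mul] at h2
      by_contra hne
      exact hi (zpow_inj_root hq hqroot (mul_right_cancel₀ hne h2))
    have hdiag : ∀ a, f (mono a 1) = mono a (lam f a) := by
      intro a
      ext b
      by_cases hab : a = b
      · subst hab; simp [lam, mono]
      · rw [hcoeff a b hab]; simp [mono, hab]
    obtain ⟨l, hl⟩ : ∃ l : (Fin n →₀ ℤ) →₀ F, l.sum (fun c s => s • phi q c) = lam f := by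
      rw [← Finsupp.mem_span_range_iff_exists_finsupp]
      have h1 := Submodule.mem_map_of_mem (f := lam) hspan
      rw [Submodule.map_span] at h1
      refine (Submodule.span_le.2 ?_) h1
      rintro _ ⟨_, ⟨p, rfl⟩, rfl⟩
      simp only [lam_Op]
      split_ifs
      · exact Submodule.subset_span ⟨_, rfl⟩
      · exact Submodule.zero_mem _
    have hlam : ∀ a, lam f a = ∑ c ∈ l.support, l c * phi q c a := by
      intro a
      rw [← hl, Finsupp.sum, Finset.sum_apply]
      rfl
    have hf_eq : f = ∑ c ∈ l.support, l c • Op q 0 c := by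
      refine ext_mono fun a => ?_
      rw [hdiag, hlam]
      simp only [LinearMap.sum_apply, LinearMap.smul_apply, Op_mono, add_zero, mul_one, smul_mono]
      simp only [mono]
      exact map_sum (AddMonoidAlgebra.singleAddHom a) _ _
    have hshift : ∀ i j, i ≠ j → ∀ a : Fin n →₀ ℤ, 0 < a j →
        lam f (a + (Finsupp.single i 1 - Finsupp.single j 1)) = lam f a := by
      intro i j hij a ha
      have h1 := hcomm _ (Algebra.subset_adjoin (Or.inr (Or.inr ⟨i, j, hij, rfl⟩)))
      have h2 := congrArg (fun z => (z (mono a 1))) h1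
      have hEm : ∀ x : F, E i j (mono a x) = ((q - q⁻¹)⁻¹ * (q ^ a j - q ^ (- a j)) * x) •
          mono (a + (Finsupp.single i 1 - Finsupp.single j 1)) 1 := by
        intro x
        rw [hE']
        simp only [LinearMap.smul_apply, LinearMap.sub_apply, Op_mono, phi_single_left]
        rw [mono, mono, ← AddMonoidAlgebra.single_sub]
        simp only [mono, AddMonoidAlgebra.smul_single, smul_eq_mul]
        congr 1
        ring_nf
      simp only [Module.End.mul_apply, hEm, map_smul, hdiag, mul_one] at h2
      simp only [smul_mono, mul_one] at h2
      have h3 := AddMonoidAlgebra.single_right_injective h2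
      have h4 : (q - q⁻¹)⁻¹ * (q ^ a j - q ^ (- a j)) ≠ 0 := by
        refine mul_ne_zero (inv_ne_zero hqq) ?_
        intro h
        have := zpow_inj_root hq hqroot (sub_eq_zero.1 h)
        omega
      exact mul_left_cancel₀ h4 h3
    have hconst : ∀ i j, ∀ c ∈ l.support, c i = c j := by
      intro i j c hc
      by_cases hij : i = j
      · rw [hij]
      have h1 := phi_indep hq hqroot j l.support
        (fun c => l c * (phi q c (Finsupp.single i 1 - Finsupp.single j 1) - 1)) (by
          intro a ha
          have h2 := hshift i j hij a ha
          rw [hlam, hlam, ← sub_eq_zero, ← Finset.sum_sub_distrib] at h2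
          rw [← h2]
          refine Finset.sum_congr rfl fun c _ => ?_
          rw [phi_add_right hq]
          ring) c hc
      have h3 := (mul_eq_zero.1 h1).resolve_left (Finsupp.mem_support_iff.1 hc)
      rw [sub_eq_add_neg (Finsupp.single i (1 : ℤ)), ← Finsupp.single_neg, phi_add_right hq,
        phi_single_right, phi_single_right, ← zpow_add₀ hq, sub_eq_zero] at h3
      have := zpow_inj_root hq hqroot (h3.trans (zpow_zero q).symm)
      omega
    rw [hf_eq]
    refine Submodule.sum_mem _ fun c hc => Submodule.smul_mem _ _ (Submodule.subset_span ?_)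
    refine ⟨c 0, ?_⟩
    have : c = c 0 • ones n := by
      ext i
      simp [ones_apply, hconst i 0 c hc]
    simp only
    rw [← this]
  · intro hf'
    clear hf
    induction hf' using Submodule.span_induction with
    | mem x hx =>
      obtain ⟨m, rfl⟩ := hx
      have hphi : ∀ i j : Fin n,
          phi q (m • ones n) (Finsupp.single i 1 - Finsupp.single j 1) = 1 := by
        intro i j
        rw [sub_eq_add_neg (Finsupp.single i (1 : ℤ)), ← Finsupp.single_neg, phi_add_right hq,
          phi_single_right, phi_single_right, ← zpow_add₀ hq]
        simp [ones_apply]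
      have hop : ∀ b c : Fin n →₀ ℤ, phi q (m • ones n) b = 1 →
          Op q 0 (m • ones n) * Op q b c = Op q b c * Op q 0 (m • ones n) := by
        intro b c h
        rw [Op_mul hq, Op_mul hq, h, phi_zero_right, add_comm b, add_comm c]
      intro g hg
      induction hg using Algebra.adjoin_induction with
      | mem x hx =>
        rcases hx with ⟨i, rfl⟩ | ⟨i, rfl⟩ | ⟨i, j, -, rfl⟩
        · exact hop _ _ (phi_zero_right _)
        · exact hop _ _ (phi_zero_right _)
        · rw [hE']
          simp only [mul_smul_comm, smul_mul_assoc, mul_sub, sub_mul, hop _ _ (hphi i j)]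
      | algebraMap r => exact (Algebra.commutes r _).symm
      | add x y _ _ hx hy => rw [mul_add, add_mul, hx, hy]
      | mul x y _ _ hx hy => rw [← mul_assoc, hx, mul_assoc, hy, mul_assoc]
    | zero => simp
    | add x y _ _ hx hy =>
      intro g hg
      rw [mul_add, add_mul, hx g hg, hy g hg]
    | smul r x _ hx =>
      intro g hg
      rw [mul_smul_comm, smul_mul_assoc, hx g hg]
end
end

section
/- An element f ∈ 𝒜 commutes with every element of 𝒜 if and only if f is a ℂ-linear combination of the operators (t_1t_2⋯t_n)^m with m ∈ ℤ; in particular the centre of 𝒜 equals the centre of A and is generated by (t_1t_2⋯t_n)^{±1}. -/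
noncomputable section

variable {R : Type*} [CommRing R] {n : ℕ}

namespace QC

open AddMonoidAlgebra

/-- pairing of exponent vectors -/
def dot {n : ℕ} (m a : Fin n →₀ ℤ) : ℤ := ∑ i, m i * a i

lemma dot_add_left {n : ℕ} (m m' a : Fin n →₀ ℤ) : dot (m + m') a = dot m a + dot m' a := by
  simp [dot, add_mul, Finset.sum_add_distrib]

lemma dot_add_right {n : ℕ} (m a a' : Fin n →₀ ℤ) : dot m (a + a') = dot m a + dot m a' := by
  simp [dot, mul_add, Finset.sum_add_distrib]

lemma dot_sub_left {n : ℕ} (m m' a : Fin n →₀ ℤ) : dot (m - m') a = dot m a - dot m' a := by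
  simp [dot, sub_mul, Finset.sum_sub_distrib]

lemma dot_sub_right {n : ℕ} (m a a' : Fin n →₀ ℤ) : dot m (a - a') = dot m a - dot m a' := by
  simp [dot, mul_sub, Finset.sum_sub_distrib]

lemma dot_zero_left {n : ℕ} (a : Fin n →₀ ℤ) : dot 0 a = 0 := by simp [dot]

lemma dot_zero_right {n : ℕ} (a : Fin n →₀ ℤ) : dot a 0 = 0 := by simp [dot]

lemma dot_single_left {n : ℕ} (i : Fin n) (k : ℤ) (a : Fin n →₀ ℤ) :
    dot (Finsupp.single i k) a = k * a i := by
  classical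
  simp [dot, Finsupp.single_apply]

lemma dot_single_right {n : ℕ} (i : Fin n) (k : ℤ) (a : Fin n →₀ ℤ) :
    dot a (Finsupp.single i k) = a i * k := by
  classical
  simp [dot, Finsupp.single_apply]

lemma dot_perm {n : ℕ} (w : Equiv.Perm (Fin n)) (m a : Fin n →₀ ℤ) :
    dot m (Finsupp.equivMapDomain w a) = dot (Finsupp.equivMapDomain w.symm m) a := by
  simp only [dot, Finsupp.equivMapDomain_apply, Equiv.symm_symm]
  rw [← Equiv.sum_comp w]
  simp

/-- affine action -/
def act {n : ℕ} (s : Equiv.Perm (Fin n) × (Fin n →₀ ℤ)) (a : Fin n →₀ ℤ) : Fin n →₀ ℤ :=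
  Finsupp.equivMapDomain s.1 a + s.2

section
variable {F : Type*} [Field F] {n : ℕ} (q : F) (hq : q ≠ 0)

lemma zpow_inj (hq : q ≠ 0) (hqroot : ∀ m : ℕ, m ≠ 0 → q ^ m ≠ 1) {k l : ℤ} (h : q ^ k = q ^ l) :
    k = l := by
  have key : ∀ z : ℤ, q ^ z = 1 → z = 0 := by
    intro z hz
    by_contra hne
    have hn : z.natAbs ≠ 0 := by simpa using hne
    apply hqroot _ hn
    rcases Int.natAbs_eq z with h | h
    · rw [h, zpow_natCast] at hz; exact hz
    · rw [h, zpow_neg, zpow_natCast, inv_eq_one] at hz; exact hz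
  have := key (k - l) (by rw [zpow_sub₀ hq, h, div_self (zpow_ne_zero _ hq)])
  omega

/-- the character `m ↦ q^{m·a}` -/
def chi (hq : q ≠ 0) (a : Fin n →₀ ℤ) : Multiplicative (Fin n →₀ ℤ) →* F where
  toFun m := q ^ dot m.toAdd a
  map_one' := by simp [dot_zero_left]
  map_mul' x y := by simp [dot_add_left, zpow_add₀ hq]

/-- the evaluation at `q^a` -/
def ev (hq : q ≠ 0) (a : Fin n →₀ ℤ) : Laur F n →ₐ[F] F :=
  AddMonoidAlgebra.lift F F (Fin n →₀ ℤ) (chi q hq a)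

lemma ev_mono (a m : Fin n →₀ ℤ) (c : F) : ev q hq a (mono m c) = c * q ^ dot m a := by
  simp [ev, mono, chi]

lemma ev_apply (a : Fin n →₀ ℤ) (p : Laur F n) :
    ev q hq a p = p.coeff.sum fun m c => c * q ^ dot m a := by
  simp [ev, AddMonoidAlgebra.lift_apply, chi]

/-- the dual character -/
def chi' (hq : q ≠ 0) (m : Fin n →₀ ℤ) : Multiplicative (Fin n →₀ ℤ) →* F where
  toFun a := q ^ dot m a.toAdd
  map_one' := by simp [dot_zero_right]
  map_mul' x y := by simp [dot_add_right, zpow_add₀ hq]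

lemma ev_inj (hqroot : ∀ m : ℕ, m ≠ 0 → q ^ m ≠ 1) (p : Laur F n)
    (h : ∀ a, ev q hq a p = 0) : p = 0 := by
  have hinj : Function.Injective (chi' (n := n) q hq) := by
    intro m m' hm
    ext i
    have := DFunLike.congr_fun hm (Multiplicative.ofAdd (Finsupp.single i 1))
    simp only [chi', MonoidHom.coe_mk, OneHom.coe_mk, toAdd_ofAdd, dot_single_right] at this
    simpa using zpow_inj q hq hqroot this
  have li := (linearIndependent_monoidHom (Multiplicative (Fin n →₀ ℤ)) F).comp _ hinj
  rw [linearIndependent_iff] at li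
  have := li p.coeff (by
    ext a
    have := h a.toAdd
    rw [ev_apply] at this
    rw [Finsupp.linearCombination_apply, Finsupp.sum_apply']
    simpa [chi'] using this)
  exact AddMonoidAlgebra.coeff_eq_zero.mp this

/-- The separating element for two affine maps. -/
lemma exists_sep (s s' : Equiv.Perm (Fin n) × (Fin n →₀ ℤ)) (h : s ≠ s') :
    ∃ D : Laur F n, D ≠ 0 ∧ ∀ a, ev q hq a D ≠ 0 → act s a ≠ act s' a := by
  classical
  by_cases hw : s.1 = s'.1
  · refine ⟨1, one_ne_zero, fun a _ h' => h ?_⟩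
    refine Prod.ext hw ?_
    simpa [act, hw] using h'
  · have : ∃ i, s.1.symm i ≠ s'.1.symm i := by
      by_contra hc
      push Not at hc
      exact hw (by simpa using congrArg Equiv.symm (Equiv.ext hc : s.1.symm = s'.1.symm))
    obtain ⟨i, hi⟩ := this
    refine ⟨mono (Finsupp.single (s.1.symm i) 1 - Finsupp.single (s'.1.symm i) 1) 1
      - mono 0 (q ^ (s'.2 i - s.2 i)), ?_, ?_⟩
    · intro h0
      have h1 := congrArg (fun p : Laur F n => p.coeff
        (Finsupp.single (s.1.symm i) 1 - Finsupp.single (s'.1.symm i) 1)) h0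
      have hne : (0 : Fin n →₀ ℤ) ≠
          Finsupp.single (s.1.symm i) 1 - Finsupp.single (s'.1.symm i) 1 := by
        intro h2
        have := DFunLike.congr_fun h2 (s.1.symm i)
        simp [hi.symm] at this
      simp [mono, hne] at h1
    · intro a ha h'
      apply ha
      have := DFunLike.congr_fun h' i
      simp only [act, Finsupp.add_apply, Finsupp.equivMapDomain_apply] at this
      rw [map_sub, ev_mono, ev_mono, dot_sub_left, dot_single_left, dot_single_left, dot_zero_left]
      have e : 1 * a (s.1.symm i) - 1 * a (s'.1.symm i) = s'.2 i - s.2 i := by linarith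
      rw [e]; simp

lemma mono_smul (a : Fin n →₀ ℤ) (c d : F) : c • mono a d = mono a (c * d) := by
  simp [mono]

lemma coeff_mono (a b : Fin n →₀ ℤ) (c : F) [Decidable (a = b)] :
    (mono a c).coeff b = if a = b then c else 0 := by
  simp [mono, Finsupp.single_apply]

lemma end_ext {f g : Module.End F (Laur F n)} (h : ∀ a, f (mono a 1) = g (mono a 1)) :
    f = g := by
  apply LinearMap.ext
  intro x
  induction x using AddMonoidAlgebra.induction_linear with
  | zero => simp
  | add x y hx hy => simp [hx, hy]
  | single a c =>
    have : (AddMonoidAlgebra.single a c : Laur F n) = c • mono a 1 := by simp [mono]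
    rw [this, map_smul, map_smul, h]

/-- the span of elementary operators -/
def elem : Set (Module.End F (Laur F n)) :=
  {f | ∃ s m, ∀ a, f (mono a 1) = q ^ dot m a • mono (act s a) 1}

include hq in
lemma elem_mul {f g : Module.End F (Laur F n)} (hf : f ∈ Submodule.span F (elem q))
    (hg : g ∈ Submodule.span F (elem q)) : f * g ∈ Submodule.span F (elem q) := by
  have h := Submodule.mul_mem_mul hf hg
  rw [Submodule.span_mul_span] at h
  refine (Submodule.span_le.mpr ?_) h
  rintro _ ⟨f, ⟨s, m, hf⟩, g, ⟨s', m', hg⟩, rfl⟩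
  have : f * g = q ^ dot m s'.2 • (q ^ (-dot m s'.2) • (f * g)) := by
    rw [smul_smul, ← zpow_add₀ hq]; simp
  simp only
  rw [this]
  refine Submodule.smul_mem _ _ (Submodule.subset_span
    ⟨(s.1 * s'.1, Finsupp.equivMapDomain s.1 s'.2 + s.2),
     m' + Finsupp.equivMapDomain s'.1.symm m, fun a => ?_⟩)
  have e : act s (act s' a) = act (s.1 * s'.1, Finsupp.equivMapDomain s.1 s'.2 + s.2) a := by
    ext i
    simp [act, Finsupp.equivMapDomain_apply, add_assoc]
    rfl
  rw [LinearMap.smul_apply, Module.End.mul_apply, hg, map_smul, hf, e, smul_smul, smul_smul,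
    ← zpow_add₀ hq, ← zpow_add₀ hq]
  congr 2
  rw [dot_add_left, ← dot_perm, act, dot_add_right]
  ring

lemma elem_rep {f : Module.End F (Laur F n)} (hf : f ∈ Submodule.span F (elem q)) :
    ∃ P : (Equiv.Perm (Fin n) × (Fin n →₀ ℤ)) →₀ Laur F n, ∀ a,
      f (mono a 1) = P.sum fun s p => ev q hq a p • mono (act s a) 1 := by
  classical
  induction hf using Submodule.span_induction with
  | mem f hf =>
    obtain ⟨s, m, h⟩ := hf
    refine ⟨Finsupp.single s (mono m 1), fun a => ?_⟩
    rw [h, Finsupp.sum_single_index (by simp), ev_mono, one_mul]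
  | zero => exact ⟨0, fun a => by simp⟩
  | add f g _ _ hf hg =>
    obtain ⟨P, hP⟩ := hf
    obtain ⟨Q, hQ⟩ := hg
    refine ⟨P + Q, fun a => ?_⟩
    rw [LinearMap.add_apply, hP, hQ, Finsupp.sum_add_index']
    · intro s; simp
    · intro s x y; rw [map_add, add_smul]
  | smul c f _ hf =>
    obtain ⟨P, hP⟩ := hf
    refine ⟨c • P, fun a => ?_⟩
    rw [LinearMap.smul_apply, hP, Finsupp.sum_smul_index', Finsupp.smul_sum]
    · refine Finsupp.sum_congr fun s _ => ?_
      rw [map_smul, smul_assoc]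
    · intro s; simp

lemma diag_rep (hqroot : ∀ m : ℕ, m ≠ 0 → q ^ m ≠ 1)
    {f : Module.End F (Laur F n)} (hf : f ∈ Submodule.span F (elem q))
    (phi : (Fin n →₀ ℤ) → F) (hphi : ∀ a, f (mono a 1) = phi a • mono a 1) :
    ∃ p : Laur F n, ∀ a, phi a = ev q hq a p := by
  classical
  obtain ⟨P, hP⟩ := elem_rep q hq hf
  have hact1 : ∀ a : Fin n →₀ ℤ, act (1, 0) a = a := by
    intro a; ext i; simp [act, Finsupp.equivMapDomain_apply]; rfl
  have hzero : ∀ s0, s0 ≠ (1, 0) → P s0 = 0 := by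
    intro s0 hs0
    choose! D hD0 hD using fun s => fun h : s ≠ s0 => exists_sep q hq s s0 h
    let S := (insert (1, 0) P.support).erase s0
    have hprod : ∏ s ∈ S, D s ≠ 0 :=
      Finset.prod_ne_zero_iff.mpr fun s hs => hD0 s (Finset.ne_of_mem_erase hs)
    have : P s0 * ∏ s ∈ S, D s = 0 := by
      apply ev_inj q hq hqroot
      intro a
      rw [map_mul, map_prod]
      by_cases hz : ∏ s ∈ S, ev q hq a (D s) = 0
      · rw [hz, mul_zero]
      · replace hz := Finset.prod_ne_zero_iff.mp hz
        have hsep : ∀ s ∈ S, act s a ≠ act s0 a := fun s hs =>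
          hD s (Finset.ne_of_mem_erase hs) a (hz s hs)
        have e1 := congrArg (fun x : Laur F n => x.coeff (act s0 a)) ((hphi a).symm.trans (hP a))
        have hne : a ≠ act s0 a := by
          have := hsep (1, 0) (by simp [S, hs0.symm])
          rwa [hact1] at this
        simp only [mono_smul, coeff_mono, hne, if_false, AddMonoidAlgebra.coeff_finsuppSum] at e1
        rw [Finsupp.sum, Finsupp.finsetSum_apply, Finset.sum_eq_single s0] at e1
        · simp only [coeff_mono, if_true, mul_one] at e1
          rw [← e1, zero_mul]
        · intro s hs hne'
          rw [coeff_mono, if_neg (hsep s (by simp [S, hne', hs, -Finsupp.mem_support_iff]))]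
        · intro hs
          rw [Finsupp.notMem_support_iff.mp hs]; simp [coeff_mono]
    exact (mul_eq_zero.mp this).resolve_right hprod
  refine ⟨P (1, 0), fun a => ?_⟩
  have e1 := congrArg (fun x : Laur F n => x.coeff a) ((hphi a).symm.trans (hP a))
  rw [Finsupp.sum, Finset.sum_eq_single (1, 0)] at e1
  · simpa [hact1, mono_smul, coeff_mono] using e1
  · intro s _ hs
    rw [hzero s hs]; simp
  · intro hs
    rw [Finsupp.notMem_support_iff.mp hs]; simp

lemma prod_apply (t : Fin n → Module.End F (Laur F n)) (e : ℤ) (hq : q ≠ 0)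
    (ht : ∀ (i : Fin n) (a : Fin n →₀ ℤ) (c : F), t i (mono a c) = q ^ (e * a i) • mono a c)
    (l : List (Fin n)) (a : Fin n →₀ ℤ) (c : F) :
    ((l.map t).prod) (mono a c) = q ^ (e * (l.map a).sum) • mono a c := by
  induction l with
  | nil => simp
  | cons i l ih =>
    rw [List.map_cons, List.prod_cons, Module.End.mul_apply, ih, map_smul, ht, smul_smul,
      ← zpow_add₀ hq, List.map_cons, List.sum_cons]
    congr 2; ring

lemma pow_apply (T : Module.End F (Laur F n)) (x : F) (v : Laur F n) (h : T v = x • v) (k : ℕ) :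
    (T ^ k) v = x ^ k • v := by
  induction k with
  | zero => simp
  | succ k ih => rw [pow_succ, Module.End.mul_apply, h, map_smul, ih, smul_smul, pow_succ, mul_comm]

lemma zpowOp_apply (t ti : Fin n → Module.End F (Laur F n)) (hq : q ≠ 0)
    (ht : ∀ (i : Fin n) (a : Fin n →₀ ℤ) (c : F), t i (mono a c) = q ^ (a i) • mono a c)
    (hti : ∀ (i : Fin n) (a : Fin n →₀ ℤ) (c : F), ti i (mono a c) = q ^ (-(a i)) • mono a c)
    (m : ℤ) (a : Fin n →₀ ℤ) (c : F) :
    zpowOp (((List.finRange n).map t).prod) ((((List.finRange n).map ti).reverse).prod) m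
      (mono a c) = q ^ (m * ∑ i, a i) • mono a c := by
  have h1 := prod_apply q t 1 hq (by simpa using ht) (List.finRange n) a c
  have h2 := prod_apply q ti (-1) hq (by simpa using hti) (List.finRange n).reverse a c
  rw [List.map_reverse, List.map_reverse, List.sum_reverse, ← Fin.sum_univ_def] at h2
  rw [← Fin.sum_univ_def] at h1
  unfold zpowOp
  split_ifs with h
  · rw [pow_apply _ _ _ h1, ← zpow_natCast, ← zpow_mul]
    congr 2
    rw [Int.toNat_of_nonneg h]; ring
  · rw [pow_apply _ _ _ h2, ← zpow_natCast, ← zpow_mul]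
    congr 2
    rw [Int.toNat_of_nonneg (by omega)]; ring

lemma mulOp_mono (b a : Fin n →₀ ℤ) (c : F) : mulOp (mono b 1) (mono a c) = mono (b + a) c := by
  simp [mulOp, mono, AddMonoidAlgebra.single_mul_single]

lemma mulOp_elem (b : Fin n →₀ ℤ) : (mulOp (mono b 1) : Module.End F (Laur F n)) ∈
    Submodule.span F (elem q) := by
  refine Submodule.subset_span ⟨(1, b), 0, fun a => ?_⟩
  rw [mulOp_mono, dot_zero_left, zpow_zero, one_smul]
  congr 1
  ext i
  simp [act, Finsupp.equivMapDomain_apply, add_comm]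
  rfl

section main
variable (hqroot : ∀ m : ℕ, m ≠ 0 → q ^ m ≠ 1)
    (t ti : Fin n → Module.End F (Laur F n))
    (ht : ∀ (i : Fin n) (a : Fin n →₀ ℤ) (c : F), t i (mono a c) = q ^ (a i) • mono a c)
    (hti : ∀ (i : Fin n) (a : Fin n →₀ ℤ) (c : F), ti i (mono a c) = q ^ (-(a i)) • mono a c)
    (d : Fin n → Module.End F (Laur F n))
    (hd : ∀ i, d i = (q - q⁻¹)⁻¹ • (mulOp (XinvEl i) * (t i - ti i)))
    (E : Fin n → Fin n → Module.End F (Laur F n))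
    (hE : ∀ i j, E i j = mulOp (Xel i) * d j)
    (W : Equiv.Perm (Fin n) → Module.End F (Laur F n))
    (hW : ∀ (w : Equiv.Perm (Fin n)) (a : Fin n →₀ ℤ) (c : F),
      W w (mono a c) = mono (Finsupp.equivMapDomain w a) c)

include hq ht hti hd hE hW in
lemma adjoin_elem {f : Module.End F (Laur F n)}
    (hf : f ∈ Algebra.adjoin F (qGenSet t ti E ∪ Set.range W)) :
    f ∈ Submodule.span F (elem q) := by
  have ht' : ∀ i, t i ∈ Submodule.span F (elem q) := by
    intro i
    refine Submodule.subset_span ⟨(1, 0), Finsupp.single i 1, fun a => ?_⟩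
    rw [ht, dot_single_left, one_mul]
    congr 2
    ext k; simp [act, Finsupp.equivMapDomain_apply]; rfl
  have hti' : ∀ i, ti i ∈ Submodule.span F (elem q) := by
    intro i
    refine Submodule.subset_span ⟨(1, 0), Finsupp.single i (-1), fun a => ?_⟩
    rw [hti, dot_single_left, neg_one_mul]
    congr 2
    ext k; simp [act, Finsupp.equivMapDomain_apply]; rfl
  have h1 : (1 : Module.End F (Laur F n)) ∈ Submodule.span F (elem q) := by
    have := mulOp_elem (F := F) (n := n) q 0
    have e : (mulOp (mono 0 1) : Module.End F (Laur F n)) = 1 := by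
      apply end_ext
      intro a
      rw [mulOp_mono]; simp
    rwa [e] at this
  induction hf using Algebra.adjoin_induction with
  | mem f hf =>
    rcases hf with (⟨i, rfl⟩ | ⟨i, rfl⟩ | ⟨i, j, _, rfl⟩) | ⟨w, rfl⟩
    · exact ht' i
    · exact hti' i
    · rw [hE, hd]
      exact elem_mul q hq (mulOp_elem q _) (Submodule.smul_mem _ _
        (elem_mul q hq (mulOp_elem q _) (Submodule.sub_mem _ (ht' j) (hti' j))))
    · refine Submodule.subset_span ⟨(w, 0), 0, fun a => ?_⟩
      rw [hW, dot_zero_left, zpow_zero, one_smul, act, add_zero]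
  | algebraMap c => rw [Algebra.algebraMap_eq_smul_one]; exact Submodule.smul_mem _ _ h1
  | add f g _ _ hf hg => exact Submodule.add_mem _ hf hg
  | mul f g _ _ hf hg => exact elem_mul q hq hf hg

include ht hti hd hE in
lemma E_apply (i j : Fin n) (a : Fin n →₀ ℤ) : E i j (mono a 1) =
    ((q - q⁻¹)⁻¹ * (q ^ (a j) - q ^ (-(a j)))) •
      mono (a + (Finsupp.single i 1 - Finsupp.single j 1)) 1 := by
  rw [hE, hd, Module.End.mul_apply, LinearMap.smul_apply, Module.End.mul_apply,
    LinearMap.sub_apply, ht, hti, ← sub_smul, map_smul, map_smul, map_smul, XinvEl, Xel,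
    mulOp_mono, mulOp_mono, smul_smul]
  congr 2
  rw [Finsupp.single_neg]
  abel

include hq hqroot ht in
lemma diag_of_comm {f : Module.End F (Laur F n)} (hf : ∀ i, f * t i = t i * f) (a : Fin n →₀ ℤ) :
    f (mono a 1) = (f (mono a 1)).coeff a • mono a 1 := by
  classical
  have hc : ∀ (i : Fin n) (v : Laur F n) (b : Fin n →₀ ℤ),
      (t i v).coeff b = q ^ (b i) * v.coeff b := by
    intro i v b
    induction v using AddMonoidAlgebra.induction_linear with
    | zero => simp
    | add x y hx hy => simp [hx, hy, mul_add]
    | single a c =>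
      have := ht i a c
      rw [mono] at this
      rw [this]
      by_cases h : a = b
      · simp [h]
      · simp [Finsupp.single_apply, h]
  ext b
  rw [mono_smul, coeff_mono]
  split_ifs with h
  · simp [h]
  · by_contra hne
    apply h
    ext i
    have h1 := congrArg (fun x : Laur F n => x.coeff b)
      (LinearMap.congr_fun (hf i) (mono a 1))
    simp only [Module.End.mul_apply, ht, map_smul, hc] at h1
    simp only [AddMonoidAlgebra.coeff_smul, Finsupp.smul_apply, smul_eq_mul] at h1
    exact zpow_inj q hq hqroot (mul_right_cancel₀ hne h1)

include hq hqroot ht hti hd hE hW in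
lemma key {f : Module.End F (Laur F n)} [NeZero n]
    (hf : f ∈ Algebra.adjoin F (qGenSet t ti E ∪ Set.range W))
    (hft : ∀ i, f * t i = t i * f) (hfE : ∀ i j, i ≠ j → f * E i j = E i j * f) :
    f ∈ Submodule.span F (Set.range fun m : ℤ =>
              zpowOp (((List.finRange n).map t).prod)
                ((((List.finRange n).map ti).reverse).prod) m) := by
  classical
  have hdiag := diag_of_comm q hq hqroot t ht hft
  obtain ⟨p, hp⟩ := diag_rep q hq hqroot
    (adjoin_elem q hq t ti ht hti d hd E hE W hW hf) _ hdiag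
  simp only [hp] at hdiag
  have hqq : (q - q⁻¹)⁻¹ ≠ 0 := by
    apply inv_ne_zero
    intro h
    have : q = q⁻¹ := sub_eq_zero.mp h
    apply hqroot 2 (by norm_num)
    rw [pow_two]
    nth_rewrite 2 [this]
    exact mul_inv_cancel₀ hq
  have hconst : ∀ i j, i ≠ j → ∀ m, p.coeff m ≠ 0 → m i = m j := by
    intro i j hij m hm
    let D : Laur F n := p.coeff.sum fun m c => mono m (c * (q ^ (m i - m j) - 1))
    let B : Laur F n := mono (Finsupp.single j 1) 1 - mono (Finsupp.single j (-1)) 1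
    have hB : B ≠ 0 := by
      intro h
      have h1 := congrArg (fun x : Laur F n => x.coeff (Finsupp.single j 1)) h
      have hne : (Finsupp.single j (-1) : Fin n →₀ ℤ) ≠ Finsupp.single j 1 := by
        intro h2
        have := DFunLike.congr_fun h2 j
        simp at this
      simp only [B, AddMonoidAlgebra.coeff_sub, Finsupp.sub_apply, coeff_mono, hne, if_true,
        if_false, AddMonoidAlgebra.coeff_zero, Finsupp.zero_apply] at h1
      simp at h1
    have hDB : D * B = 0 := by
      apply ev_inj q hq hqroot
      intro a
      have hD : ev q hq a D =
          ev q hq (a + (Finsupp.single i 1 - Finsupp.single j 1)) p - ev q hq a p := by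
        rw [ev_apply q hq _ p, ev_apply q hq _ p, Finsupp.sum, Finsupp.sum,
          ← Finset.sum_sub_distrib]
        simp only [D, Finsupp.sum, map_sum]
        refine Finset.sum_congr rfl fun m _ => ?_
        rw [ev_mono, dot_add_right, dot_sub_right, dot_single_right, dot_single_right,
          zpow_add₀ hq, mul_one, mul_one]
        ring
      have hBa : ev q hq a B = q ^ (a j) - q ^ (-(a j)) := by
        simp only [B, map_sub, ev_mono, dot_single_left]
        simp
      rw [map_mul, hD, hBa]
      have h1 := LinearMap.congr_fun (hfE i j hij) (mono a 1)
      rw [Module.End.mul_apply, Module.End.mul_apply, hdiag, map_smul,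
        E_apply q t ti ht hti d hd E hE, map_smul, hdiag] at h1
      have h2 := congrArg (fun x : Laur F n => x.coeff
        (a + (Finsupp.single i 1 - Finsupp.single j 1))) h1
      simp only [mono_smul, coeff_mono, if_true, mul_one] at h2
      apply mul_left_cancel₀ hqq
      linear_combination h2
    have hD0 := (mul_eq_zero.mp hDB).resolve_right hB
    have h3 := congrArg (fun x : Laur F n => x.coeff m) hD0
    simp only [D, AddMonoidAlgebra.coeff_finsuppSum, AddMonoidAlgebra.coeff_zero] at h3
    rw [Finsupp.sum, Finsupp.finsetSum_apply, Finset.sum_eq_single m] at h3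
    · simp only [coeff_mono, if_true, Finsupp.zero_apply] at h3
      have h4 := (mul_eq_zero.mp h3).resolve_left hm
      have h5 : m i - m j = 0 := zpow_inj q hq hqroot (by rw [zpow_zero]; linear_combination h4)
      omega
    · intro b _ hb
      simp [coeff_mono, hb]
    · intro h
      exact absurd (Finsupp.notMem_support_iff.mp h) hm
  let i0 : Fin n := 0
  have hfin : f = ∑ m ∈ p.coeff.support, p.coeff m •
      zpowOp (((List.finRange n).map t).prod)
                ((((List.finRange n).map ti).reverse).prod) (m i0) := by
    apply end_ext
    intro a
    rw [hdiag, LinearMap.sum_apply, ev_apply, Finsupp.sum, Finset.sum_smul]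
    refine Finset.sum_congr rfl fun m hm => ?_
    rw [LinearMap.smul_apply, zpowOp_apply q t ti hq ht hti, smul_smul]
    congr 3
    rw [dot, Finset.mul_sum]
    refine Finset.sum_congr rfl fun i _ => ?_
    congr 1
    by_cases h : i = i0
    · rw [h]
    · exact hconst i i0 h m (Finsupp.mem_support_iff.mp hm)
  rw [hfin]
  exact Submodule.sum_mem _ fun m _ => Submodule.smul_mem _ _ (Submodule.subset_span ⟨_, rfl⟩)

lemma span_mem {f : Module.End F (Laur F n)}
    (hf : f ∈ Submodule.span F (Set.range fun m : ℤ =>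
              zpowOp (((List.finRange n).map t).prod)
                ((((List.finRange n).map ti).reverse).prod) m)) :
    f ∈ Algebra.adjoin F (qGenSet t ti E) := by
  have : Submodule.span F (Set.range fun m : ℤ =>
              zpowOp (((List.finRange n).map t).prod)
                ((((List.finRange n).map ti).reverse).prod) m) ≤
      Subalgebra.toSubmodule (Algebra.adjoin F (qGenSet t ti E)) := by
    rw [Submodule.span_le]
    rintro _ ⟨m, rfl⟩
    simp only [zpowOp]
    split_ifs
    · refine Subalgebra.pow_mem _ (Subalgebra.list_prod_mem _ ?_) _
      intro x hx
      simp only [List.mem_map] at hx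
      obtain ⟨i, _, rfl⟩ := hx
      exact Algebra.subset_adjoin (Or.inl ⟨i, rfl⟩)
    · refine Subalgebra.pow_mem _ (Subalgebra.list_prod_mem _ ?_) _
      intro x hx
      simp only [List.mem_reverse, List.mem_map] at hx
      obtain ⟨i, _, rfl⟩ := hx
      exact Algebra.subset_adjoin (Or.inr (Or.inl ⟨i, rfl⟩))
  exact this hf

include hq ht hti hd hE hW in
lemma span_comm {f g : Module.End F (Laur F n)}
    (hf : f ∈ Submodule.span F (Set.range fun m : ℤ =>
              zpowOp (((List.finRange n).map t).prod)
                ((((List.finRange n).map ti).reverse).prod) m))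
    (hg : g ∈ Algebra.adjoin F (qGenSet t ti E ∪ Set.range W)) : f * g = g * f := by
  induction hf using Submodule.span_induction with
  | zero => simp
  | add x y _ _ hx hy => rw [add_mul, mul_add, hx, hy]
  | smul c x _ hx => rw [smul_mul_assoc, mul_smul_comm, hx]
  | mem x hx =>
    obtain ⟨m, rfl⟩ := hx
    have hz := zpowOp_apply q t ti hq ht hti m
    simp only
    induction hg using Algebra.adjoin_induction with
    | algebraMap c => exact (Algebra.commutes c _).symm
    | add x y _ _ hx hy => rw [add_mul, mul_add, hx, hy]
    | mul x y _ _ hx hy => rw [← mul_assoc, hx, mul_assoc, hy, mul_assoc]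
    | mem g hg =>
      apply end_ext
      intro a
      rw [Module.End.mul_apply, Module.End.mul_apply, hz, map_smul]
      rcases hg with (⟨i, rfl⟩ | ⟨i, rfl⟩ | ⟨i, j, _, rfl⟩) | ⟨w, rfl⟩
      · rw [ht, map_smul, hz, smul_comm]
      · rw [hti, map_smul, hz, smul_comm]
      · rw [E_apply q t ti ht hti d hd E hE, map_smul, hz, smul_comm]
        congr 3
        simp [Finset.sum_add_distrib, Finset.sum_sub_distrib, Finsupp.single_apply]
      · rw [hW, hz]
        congr 3
        simp only [Finsupp.equivMapDomain_apply]
        rw [Equiv.sum_comp w.symm]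

end main
end
end QC

/-- The centre of the algebra `𝒜 = ℂ𝔖_n ⋉ A`: an element `f ∈ 𝒜` commutes
with every element of `𝒜` iff `f` is an `F`-linear combination of the `(t_1 ⋯ t_n)^m`, `m ∈ ℤ`;
in particular the centre of `𝒜` coincides with the centre of `A`. -/
theorem statement3
    (F : Type*) [Field F] (n : ℕ) [NeZero n]
    (q : F) (hq : q ≠ 0) (hqroot : ∀ m : ℕ, m ≠ 0 → q ^ m ≠ 1)
    -- the q-shift operators `t_i` and their inverses
    (t ti : Fin n → Module.End F (Laur F n))
    (ht : ∀ (i : Fin n) (a : Fin n →₀ ℤ) (c : F), t i (mono a c) = q ^ (a i) • mono a c)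
    (hti : ∀ (i : Fin n) (a : Fin n →₀ ℤ) (c : F), ti i (mono a c) = q ^ (-(a i)) • mono a c)
    -- the operators `d_i = (q - q⁻¹)⁻¹ X_i⁻¹ (t_i - t_i⁻¹)`
    (d : Fin n → Module.End F (Laur F n))
    (hd : ∀ i, d i = (q - q⁻¹)⁻¹ • (mulOp (XinvEl i) * (t i - ti i)))
    -- the operators `E^q_{ij} = X_i · d_j`
    (E : Fin n → Fin n → Module.End F (Laur F n))
    (hE : ∀ i j, E i j = mulOp (Xel i) * d j)
    -- the action of the symmetric group permuting the variables
    (W : Equiv.Perm (Fin n) → Module.End F (Laur F n))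
    (hW : ∀ (w : Equiv.Perm (Fin n)) (a : Fin n →₀ ℤ) (c : F),
      W w (mono a c) = mono (Finsupp.equivMapDomain w a) c)
    :
    (∀ f ∈ Algebra.adjoin F (qGenSet t ti E ∪ Set.range W),
      ((∀ g ∈ Algebra.adjoin F (qGenSet t ti E ∪ Set.range W), f * g = g * f) ↔
        f ∈ Submodule.span F (Set.range fun m : ℤ =>
              zpowOp (((List.finRange n).map t).prod)
                ((((List.finRange n).map ti).reverse).prod) m))) ∧
    {f | f ∈ Algebra.adjoin F (qGenSet t ti E ∪ Set.range W) ∧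
        ∀ g ∈ Algebra.adjoin F (qGenSet t ti E ∪ Set.range W), f * g = g * f}
      = {f | f ∈ Algebra.adjoin F (qGenSet t ti E) ∧
        ∀ g ∈ Algebra.adjoin F (qGenSet t ti E), f * g = g * f} := by
  have hmono : Algebra.adjoin F (qGenSet t ti E) ≤
      Algebra.adjoin F (qGenSet t ti E ∪ Set.range W) :=
    Algebra.adjoin_mono Set.subset_union_left
  have hk : ∀ f ∈ Algebra.adjoin F (qGenSet t ti E ∪ Set.range W),
      (∀ g ∈ Algebra.adjoin F (qGenSet t ti E), f * g = g * f) →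
        f ∈ Submodule.span F (Set.range fun m : ℤ =>
              zpowOp (((List.finRange n).map t).prod)
                ((((List.finRange n).map ti).reverse).prod) m) := by
    intro f hf hc
    exact QC.key q hq hqroot t ti ht hti d hd E hE W hW hf
      (fun i => hc _ (Algebra.subset_adjoin (Or.inl ⟨i, rfl⟩)))
      (fun i j hij => hc _ (Algebra.subset_adjoin (Or.inr (Or.inr ⟨i, j, hij, rfl⟩))))
  refine ⟨fun f hf => ⟨fun hc => hk f hf fun g hg => hc g (hmono hg), fun h g hg =>
    QC.span_comm q hq t ti ht hti d hd E hE W hW h hg⟩, ?_⟩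
  ext f
  constructor
  · rintro ⟨hf, hc⟩
    exact ⟨QC.span_mem t ti E (hk f hf fun g hg => hc g (hmono hg)), fun g hg => hc g (hmono hg)⟩
  · rintro ⟨hf, hc⟩
    exact ⟨hmono hf, fun g hg =>
      QC.span_comm q hq t ti ht hti d hd E hE W hW (hk f (hmono hf) hc) hg⟩
end
end

section
/- For all 1 ≤ k ≤ n−1 and 1 ≤ i ≤ n with i ∉ {k, k+1}, the operators T_k and D_i commute: T_kD_i = D_iT_k. Moreover, for all 1 ≤ k ≤ n−1, T_k^{−1}·D_k·T_k^{−1} = D_{k+1}. -/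
noncomputable section

variable {R : Type*} [CommRing R] {n : ℕ}

theorem aF_succ {M : Type*} [Monoid M] (f : ℕ → M) (s l : ℕ) :
    aF f s (l + 1) = f s * aF f (s + 1) l := by
  simp [aF, List.range'_succ]

theorem dF_succ {M : Type*} [Monoid M] (f : ℕ → M) (s l : ℕ) :
    dF f s (l + 1) = dF f (s + 1) l * f s := by
  simp [dF, List.range'_succ]

theorem aF_comm {M : Type*} [Monoid M] (f : ℕ → M) (x : M) (l : ℕ) :
    ∀ s, (∀ j, s ≤ j → j < s + l → x * f j = f j * x) → x * aF f s l = aF f s l * x := by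
  induction l with
  | zero => intro s _; simp [aF]
  | succ l ih =>
    intro s h
    rw [aF_succ, ← mul_assoc, h s le_rfl (by omega), mul_assoc,
      ih (s + 1) (fun j h1 h2 => h j (by omega) (by omega)), mul_assoc]

theorem dF_comm {M : Type*} [Monoid M] (f : ℕ → M) (x : M) (l : ℕ) :
    ∀ s, (∀ j, s ≤ j → j < s + l → x * f j = f j * x) → x * dF f s l = dF f s l * x := by
  induction l with
  | zero => intro s _; simp [dF]
  | succ l ih =>
    intro s h
    rw [dF_succ, ← mul_assoc, ih (s + 1) (fun j h1 h2 => h j (by omega) (by omega)),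
      mul_assoc, h s le_rfl (by omega), mul_assoc]

theorem aF_shift {M : Type*} [Monoid M] (f : ℕ → M) (n : ℕ)
    (hb : ∀ k, k + 2 < n → f k * f (k + 1) * f k = f (k + 1) * f k * f (k + 1))
    (hc : ∀ j k, k + 1 < n → j + 1 < k → f j * f k = f k * f j) (l : ℕ) :
    ∀ i k, i ≤ k → k + 1 < i + l → i + l < n → f (k + 1) * aF f i l = aF f i l * f k := by
  induction l with
  | zero => intro i k _ _ _; omega
  | succ l ih =>
    intro i k h1 h2 h3
    rcases Nat.eq_or_lt_of_le h1 with h | h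
    · subst h
      obtain ⟨l, rfl⟩ : ∃ m, l = m + 1 := ⟨l - 1, by omega⟩
      have e : f i * aF f (i + 1 + 1) l = aF f (i + 1 + 1) l * f i :=
        aF_comm f _ l _ (fun j h4 h5 => hc i j (by omega) (by omega))
      rw [aF_succ, aF_succ]
      calc f (i + 1) * (f i * (f (i + 1) * aF f (i + 1 + 1) l))
          = (f (i + 1) * f i * f (i + 1)) * aF f (i + 1 + 1) l := by simp only [mul_assoc]
        _ = f i * f (i + 1) * (f i * aF f (i + 1 + 1) l) := by
            rw [← hb i (by omega)]; simp only [mul_assoc]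
        _ = _ := by rw [e]; simp only [mul_assoc]
    · rw [aF_succ, ← mul_assoc, ← hc i (k + 1) (by omega) (by omega), mul_assoc,
        ih (i + 1) k (by omega) (by omega) (by omega), mul_assoc]

theorem dF_shift {M : Type*} [Monoid M] (f : ℕ → M) (n : ℕ)
    (hb : ∀ k, k + 2 < n → f k * f (k + 1) * f k = f (k + 1) * f k * f (k + 1))
    (hc : ∀ j k, k + 1 < n → j + 1 < k → f j * f k = f k * f j) (l : ℕ) :
    ∀ i k, i ≤ k → k + 1 < i + l → i + l < n → f k * dF f i l = dF f i l * f (k + 1) := by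
  induction l with
  | zero => intro i k _ _ _; omega
  | succ l ih =>
    intro i k h1 h2 h3
    rcases Nat.eq_or_lt_of_le h1 with h | h
    · subst h
      obtain ⟨l, rfl⟩ : ∃ m, l = m + 1 := ⟨l - 1, by omega⟩
      have e : f i * dF f (i + 1 + 1) l = dF f (i + 1 + 1) l * f i :=
        dF_comm f _ l _ (fun j h4 h5 => hc i j (by omega) (by omega))
      rw [dF_succ, dF_succ]
      calc f i * (dF f (i + 1 + 1) l * f (i + 1) * f i)
          = (f i * dF f (i + 1 + 1) l) * f (i + 1) * f i := by simp only [mul_assoc]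
        _ = dF f (i + 1 + 1) l * (f i * f (i + 1) * f i) := by
            rw [e]; simp only [mul_assoc]
        _ = _ := by rw [hb i (by omega)]; simp only [mul_assoc]
    · rw [dF_succ, ← mul_assoc, ih (i + 1) k (by omega) (by omega) (by omega), mul_assoc,
        ← hc i (k + 1) (by omega) (by omega), mul_assoc]

/-- The braid computation in a field. -/
theorem braid_field {K : Type*} [Field K] (x y z a b : K) (hab : a * b = 1)
    (hxy : y - x ≠ 0) (hyz : z - y ≠ 0) (hxz : z - x ≠ 0)
    (p p1 p2 p12 p21 p121 v v1 v2 v12 u u1 r w w1 w2 w21 t t2 r' : K)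
    (hv : (y - x) * v = (b * y - a * x) * p1 + (a - b) * (y * p))
    (hv1 : (x - y) * v1 = (b * x - a * y) * p + (a - b) * (x * p1))
    (hv2 : (z - x) * v2 = (b * z - a * x) * p21 + (a - b) * (z * p2))
    (hv12 : (z - y) * v12 = (b * z - a * y) * p121 + (a - b) * (z * p12))
    (hu : (z - y) * u = (b * z - a * y) * v2 + (a - b) * (z * v))
    (hu1 : (z - x) * u1 = (b * z - a * x) * v12 + (a - b) * (z * v1))
    (hr : (y - x) * r = (b * y - a * x) * u1 + (a - b) * (y * u))
    (hw : (z - y) * w = (b * z - a * y) * p2 + (a - b) * (z * p))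
    (hw2 : (y - z) * w2 = (b * y - a * z) * p + (a - b) * (y * p2))
    (hw1 : (z - x) * w1 = (b * z - a * x) * p12 + (a - b) * (z * p1))
    (hw21 : (y - x) * w21 = (b * y - a * x) * p121 + (a - b) * (y * p21))
    (ht : (y - x) * t = (b * y - a * x) * w1 + (a - b) * (y * w))
    (ht2 : (z - x) * t2 = (b * z - a * x) * w21 + (a - b) * (z * w2))
    (hr' : (z - y) * r' = (b * z - a * y) * t2 + (a - b) * (z * t)) : r = r' := by
  have hyx : x - y ≠ 0 := by intro h; apply hxy; linear_combination -h
  have hzy : y - z ≠ 0 := by intro h; apply hyz; linear_combination -h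
  have ha : a ≠ 0 := left_ne_zero_of_mul_eq_one hab
  obtain rfl : b = a⁻¹ := eq_inv_of_mul_eq_one_right hab
  rw [mul_comm, ← eq_div_iff (by assumption)] at hv hv1 hv2 hv12 hu hu1 hr hw hw2 hw1 hw21 ht ht2 hr'
  subst hv hv1 hv2 hv12 hw hw2 hw1 hw21
  subst hu hu1 ht ht2
  subst hr hr'
  rw [← neg_sub y x, ← neg_sub z y]
  field_simp
  ring

theorem braid_dom {A : Type*} [CommRing A] [IsDomain A] (x y z a b : A) (hab : a * b = 1)
    (hxy : y - x ≠ 0) (hyz : z - y ≠ 0) (hxz : z - x ≠ 0)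
    (s1 s2 : A → A) (m1 : ∀ p q, s1 (p * q) = s1 p * s1 q) (m2 : ∀ p q, s2 (p * q) = s2 p * s2 q)
    (a1 : ∀ p q, s1 (p + q) = s1 p + s1 q) (a2 : ∀ p q, s2 (p + q) = s2 p + s2 q)
    (d1 : ∀ p q, s1 (p - q) = s1 p - s1 q) (d2 : ∀ p q, s2 (p - q) = s2 p - s2 q)
    (i1 : ∀ p, s1 (s1 p) = p) (i2 : ∀ p, s2 (s2 p) = p)
    (hs : ∀ p, s1 (s2 (s1 p)) = s2 (s1 (s2 p)))
    (sa1 : s1 a = a) (sb1 : s1 b = b) (sa2 : s2 a = a) (sb2 : s2 b = b)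
    (x1 : s1 x = y) (y1 : s1 y = x) (z1 : s1 z = z)
    (x2 : s2 x = x) (y2 : s2 y = z) (z2 : s2 z = y)
    (T1 T2 : A → A)
    (h1 : ∀ p, (y - x) * T1 p = (b * y - a * x) * s1 p + (a - b) * (y * p))
    (h2 : ∀ p, (z - y) * T2 p = (b * z - a * y) * s2 p + (a - b) * (z * p)) (p : A) :
    T1 (T2 (T1 p)) = T2 (T1 (T2 p)) := by
  let K := FractionRing A
  let ι := algebraMap A K
  have inj : Function.Injective ι := IsFractionRing.injective A K
  have nz : ∀ c : A, c ≠ 0 → ι c ≠ 0 := fun c hc h => hc (inj (by rw [h, map_zero]))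
  have h11 : ∀ p, (x - y) * s1 (T1 p) = (b * x - a * y) * p + (a - b) * (x * s1 p) := by
    intro p; have := congrArg s1 (h1 p)
    simpa only [m1, a1, d1, i1, sa1, sb1, x1, y1, z1] using this
  have h22 : ∀ p, (y - z) * s2 (T2 p) = (b * y - a * z) * p + (a - b) * (y * s2 p) := by
    intro p; have := congrArg s2 (h2 p)
    simpa only [m2, a2, d2, i2, sa2, sb2, x2, y2, z2] using this
  have h21 : ∀ p, (z - x) * s2 (T1 p) = (b * z - a * x) * s2 (s1 p) + (a - b) * (z * s2 p) := by
    intro p; have := congrArg s2 (h1 p)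
    simpa only [m2, a2, d2, i2, sa2, sb2, x2, y2, z2] using this
  have h12 : ∀ p, (z - x) * s1 (T2 p) = (b * z - a * x) * s1 (s2 p) + (a - b) * (z * s1 p) := by
    intro p; have := congrArg s1 (h2 p)
    simpa only [m1, a1, d1, i1, sa1, sb1, x1, y1, z1] using this
  have h121 : (z - y) * s1 (s2 (T1 p))
      = (b * z - a * y) * s1 (s2 (s1 p)) + (a - b) * (z * s1 (s2 p)) := by
    have := congrArg s1 (h21 p)
    simpa only [m1, a1, d1, i1, sa1, sb1, x1, y1, z1] using this
  have h212 : (y - x) * s2 (s1 (T2 p))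
      = (b * y - a * x) * s1 (s2 (s1 p)) + (a - b) * (y * s2 (s1 p)) := by
    have := congrArg s2 (h12 p)
    rw [hs]
    simpa only [m2, a2, d2, i2, sa2, sb2, x2, y2, z2] using this
  have up : ∀ {c d : A}, c = d → ι c = ι d := fun h => congrArg ι h
  apply inj
  apply braid_field (ι x) (ι y) (ι z) (ι a) (ι b) (by rw [← map_mul, hab, map_one])
    (by rw [← map_sub]; exact nz _ hxy) (by rw [← map_sub]; exact nz _ hyz)
    (by rw [← map_sub]; exact nz _ hxz)
    (ι p) (ι (s1 p)) (ι (s2 p)) (ι (s1 (s2 p))) (ι (s2 (s1 p))) (ι (s1 (s2 (s1 p))))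
    (ι (T1 p)) (ι (s1 (T1 p))) (ι (s2 (T1 p))) (ι (s1 (s2 (T1 p))))
    (ι (T2 (T1 p))) (ι (s1 (T2 (T1 p)))) _
    (ι (T2 p)) (ι (s1 (T2 p))) (ι (s2 (T2 p))) (ι (s2 (s1 (T2 p))))
    (ι (T1 (T2 p))) (ι (s2 (T1 (T2 p))))
  · simpa only [map_mul, map_add, map_sub] using up (h1 p)
  · simpa only [map_mul, map_add, map_sub] using up (h11 p)
  · simpa only [map_mul, map_add, map_sub] using up (h21 p)
  · simpa only [map_mul, map_add, map_sub] using up h121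
  · simpa only [map_mul, map_add, map_sub] using up (h2 (T1 p))
  · simpa only [map_mul, map_add, map_sub] using up (h12 (T1 p))
  · simpa only [map_mul, map_add, map_sub] using up (h1 (T2 (T1 p)))
  · simpa only [map_mul, map_add, map_sub] using up (h2 p)
  · simpa only [map_mul, map_add, map_sub] using up (h22 p)
  · simpa only [map_mul, map_add, map_sub] using up (h12 p)
  · simpa only [map_mul, map_add, map_sub] using up h212
  · simpa only [map_mul, map_add, map_sub] using up (h1 (T2 p))
  · simpa only [map_mul, map_add, map_sub] using up (h21 (T2 p))
  · simpa only [map_mul, map_add, map_sub] using up (h2 (T1 (T2 p)))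

/-- Distant Demazure-Lusztig operators commute. -/
theorem comm_dom {A : Type*} [CommRing A] [IsDomain A] (x y z w a b : A)
    (hxy : y - x ≠ 0) (hzw : w - z ≠ 0)
    (s1 s2 : A → A) (m1 : ∀ p q, s1 (p * q) = s1 p * s1 q) (m2 : ∀ p q, s2 (p * q) = s2 p * s2 q)
    (a1 : ∀ p q, s1 (p + q) = s1 p + s1 q) (a2 : ∀ p q, s2 (p + q) = s2 p + s2 q)
    (d1 : ∀ p q, s1 (p - q) = s1 p - s1 q) (d2 : ∀ p q, s2 (p - q) = s2 p - s2 q)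
    (hs : ∀ p, s1 (s2 p) = s2 (s1 p))
    (sa1 : s1 a = a) (sb1 : s1 b = b) (sa2 : s2 a = a) (sb2 : s2 b = b)
    (z1 : s1 z = z) (w1 : s1 w = w) (x2 : s2 x = x) (y2 : s2 y = y)
    (T1 T2 : A → A)
    (h1 : ∀ p, (y - x) * T1 p = (b * y - a * x) * s1 p + (a - b) * (y * p))
    (h2 : ∀ p, (w - z) * T2 p = (b * w - a * z) * s2 p + (a - b) * (w * p)) (p : A) :
    T1 (T2 p) = T2 (T1 p) := by
  have h21 : (y - x) * s2 (T1 p) = (b * y - a * x) * s2 (s1 p) + (a - b) * (y * s2 p) := by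
    have := congrArg s2 (h1 p)
    simpa only [m2, a2, d2, sa2, sb2, x2, y2] using this
  have h12 : (w - z) * s1 (T2 p) = (b * w - a * z) * s2 (s1 p) + (a - b) * (w * s1 p) := by
    have := congrArg s1 (h2 p)
    simpa only [m1, a1, d1, sa1, sb1, z1, w1, hs] using this
  apply mul_left_cancel₀ (mul_ne_zero hxy hzw)
  linear_combination (w - z) * h1 (T2 p) - (y - x) * h2 (T1 p)
    + (b * y - a * x) * h12 - (b * w - a * z) * h21 + (a - b) * y * h2 p - (a - b) * w * h1 p

section ops
variable {F : Type*} [Field F] {N : ℕ}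

theorem lin_ext (L M : Module.End F (Laur F N)) (h : ∀ a c, L (mono a c) = M (mono a c)) :
    L = M := by
  refine LinearMap.ext fun p => ?_
  induction p using AddMonoidAlgebra.induction_linear with
  | zero => simp
  | add f g hf hg => rw [map_add, map_add, hf, hg]
  | single a c => exact h a c

theorem mono_mul (a b : Fin N →₀ ℤ) (c d : F) :
    mono a c * mono b d = mono (a + b) (c * d) := AddMonoidAlgebra.single_mul_single ..

theorem mul_of_mono (L : Module.End F (Laur F N))
    (h : ∀ a b c d, L (mono a c * mono b d) = L (mono a c) * L (mono b d)) (p r : Laur F N) :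
    L (p * r) = L p * L r := by
  induction p using AddMonoidAlgebra.induction_linear with
  | zero => simp
  | add f g hf hg => rw [add_mul, map_add, map_add, hf, hg, add_mul]
  | single a c =>
    induction r using AddMonoidAlgebra.induction_linear with
    | zero => simp
    | add f g hf hg => rw [mul_add, map_add, map_add, hf, hg, mul_add]
    | single b d => exact h a b c d

instance : IsDomain (Laur F N) := inferInstance

theorem Xel_ne {i j : Fin N} (h : i ≠ j) : (Xel i - Xel j : Laur F N) ≠ 0 := by
  intro e
  rw [sub_eq_zero] at e
  have := (AddMonoidAlgebra.single_left_injective (one_ne_zero (α := F))) e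
  exact h (Finsupp.single_left_injective one_ne_zero this)

end ops

/-- In the polynomial representation of the double affine Hecke algebra of
type `GLₙ` (with the operators characterised by the hypotheses below; all indices are
`0`-based, so the paper's `X_i, Y_i, D_i` for `1 ≤ i ≤ n` are `X i, Y i, D i` for `i < n`,
and `T_k` for `1 ≤ k ≤ n-1` is `T k` for `k + 1 < n`):
`T_k` and `D_i` commute for `i ∉ {k, k+1}`, and `T_k⁻¹ · D_k · T_k⁻¹ = D_{k+1}`. -/
theorem statement4
    (F : Type*) [Field F] (n : ℕ) [NeZero n]
    (q τ : F) (hq : q ≠ 0) (hqroot : ∀ m : ℕ, m ≠ 0 → q ^ m ≠ 1) (hτ : τ ≠ 0)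
    -- the action of the symmetric group permuting the variables
    (W : Equiv.Perm (Fin n) → Module.End F (Laur F n))
    (hW : ∀ (w : Equiv.Perm (Fin n)) (a : Fin n →₀ ℤ) (c : F),
      W w (mono a c) = mono (Finsupp.equivMapDomain w a) c)
    -- the Demazure–Lusztig operators `T_k` and their inverses `Ti k = T k + τ⁻¹ - τ`
    (T Ti : ℕ → Module.End F (Laur F n))
    (hT : ∀ (k : ℕ) (hk : k + 1 < n) (p : Laur F n),
      (Xel ⟨k + 1, hk⟩ - Xel ⟨k, Nat.lt_of_succ_lt hk⟩) * T k p
        = (τ⁻¹ • Xel ⟨k + 1, hk⟩ - τ • Xel ⟨k, Nat.lt_of_succ_lt hk⟩)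
            * W (Equiv.swap ⟨k, Nat.lt_of_succ_lt hk⟩ ⟨k + 1, hk⟩) p
          + (τ - τ⁻¹) • (Xel ⟨k + 1, hk⟩ * p))
    (hTi : ∀ k, Ti k = T k + (τ⁻¹ - τ) • (1 : Module.End F (Laur F n)))
    (hTinv : ∀ k, k + 1 < n → T k * Ti k = 1 ∧ Ti k * T k = 1)
    -- the operator `π⁻¹`
    (piInv : Module.End F (Laur F n))
    (hpiInv : ∀ (a : Fin n →₀ ℤ) (c : F),
      piInv (mono a c)
        = q ^ (a 0) • mono (Finsupp.equivMapDomain (finRotate n).symm a) c)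
    -- the operators `Y_i = T_i ⋯ T_{n-1} ⬝ π⁻¹ ⬝ T_1⁻¹ ⋯ T_{i-1}⁻¹` and their inverses
    (Y Yi : ℕ → Module.End F (Laur F n))
    (hY : ∀ i, Y i = aF T i (n - 1 - i) * piInv * aF Ti 0 i)
    (hYinv : ∀ i, i < n → Y i * Yi i = 1 ∧ Yi i * Y i = 1)
    -- the `q`-Dunkl-type operators `D_i`
    (D : ℕ → Module.End F (Laur F n))
    (hD : ∀ i, D i = aF T i (n - 1 - i)
        * ((q - q⁻¹)⁻¹ • (XinvOp (n - 1) * (Y (n - 1) - Yi (n - 1))))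
        * dF T i (n - 1 - i)) :
    (∀ k i : ℕ, k + 1 < n → i < n → i ≠ k → i ≠ k + 1 → T k * D i = D i * T k) ∧
    (∀ k : ℕ, k + 1 < n → Ti k * D k * Ti k = D (k + 1)) := by
  have hWmul : ∀ w p r, W w (p * r) = W w p * W w r := by
    intro w
    apply mul_of_mono
    intro a b c d
    rw [mono_mul, hW, hW, hW, mono_mul]
    congr 1
    ext i; simp [Finsupp.equivMapDomain_apply]
  have hWX : ∀ w i, W w (Xel i) = Xel (w i) := by
    intro w i
    rw [Xel, hW, Finsupp.equivMapDomain_single]; rfl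
  have hWXi : ∀ w i, W w (XinvEl i) = XinvEl (w i) := by
    intro w i
    rw [XinvEl, hW, Finsupp.equivMapDomain_single]; rfl
  have hWW : ∀ w w' p, W w (W w' p) = W (w * w') p := by
    intro w w' p
    have : W w * W w' = W (w * w') := by
      apply lin_ext
      intro a c
      rw [Module.End.mul_apply, hW, hW, hW, ← Finsupp.equivMapDomain_trans]; rfl
    rw [← this]; rfl
  have hW1 : ∀ p, W 1 p = p := by
    intro p
    have : W 1 = 1 := by
      apply lin_ext
      intro a c
      rw [hW]
      congr 1
      ext i; rw [Finsupp.equivMapDomain_apply]; rfl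
    rw [this]; rfl
  have hWC : ∀ w c, W w (mono 0 c) = mono 0 c := by
    intro w c
    rw [hW]; congr 1
  have hsm : ∀ (c : F) (p : Laur F n), c • p = mono 0 c * p := by
    intro c p
    rw [Algebra.smul_def]; rfl
  have hCsub : ∀ c d : F, (mono 0 (c - d) : Laur F n) = mono 0 c - mono 0 d := by
    intro c d
    simp [mono, AddMonoidAlgebra.single_sub]
  have hab : (mono 0 τ : Laur F n) * mono 0 τ⁻¹ = 1 := by
    rw [mono_mul, mul_inv_cancel₀ hτ]; simp [mono, AddMonoidAlgebra.one_def]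
  have hT' : ∀ (k : ℕ) (hk : k + 1 < n) (p : Laur F n),
      (Xel ⟨k + 1, hk⟩ - Xel ⟨k, Nat.lt_of_succ_lt hk⟩) * T k p
        = (mono 0 τ⁻¹ * Xel ⟨k + 1, hk⟩ - mono 0 τ * Xel ⟨k, Nat.lt_of_succ_lt hk⟩)
            * W (Equiv.swap ⟨k, Nat.lt_of_succ_lt hk⟩ ⟨k + 1, hk⟩) p
          + (mono 0 τ - mono 0 τ⁻¹) * (Xel ⟨k + 1, hk⟩ * p) := by
    intro k hk p
    rw [hT, hsm, hsm, hsm, hCsub]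
  have hne : ∀ (i j : ℕ) (hi : i < n) (hj : j < n), i ≠ j →
      (Xel ⟨i, hi⟩ - Xel ⟨j, hj⟩ : Laur F n) ≠ 0 := by
    intro i j hi hj h
    exact Xel_ne (by simpa using h)
  -- braid relations
  have hbraid : ∀ k, k + 2 < n → T k * T (k + 1) * T k = T (k + 1) * T k * T (k + 1) := by
    intro k hk
    have e01 : (⟨k, by omega⟩ : Fin n) ≠ ⟨k + 1, by omega⟩ := by simp
    have e02 : (⟨k, by omega⟩ : Fin n) ≠ ⟨k + 2, by omega⟩ := by simp
    have e12 : (⟨k + 1, by omega⟩ : Fin n) ≠ ⟨k + 2, by omega⟩ := by simp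
    refine LinearMap.ext fun p => ?_
    refine braid_dom (Xel ⟨k, by omega⟩) (Xel ⟨k + 1, by omega⟩) (Xel ⟨k + 2, by omega⟩)
      (mono 0 τ) (mono 0 τ⁻¹) hab (hne _ _ _ _ (by omega)) (hne _ _ _ _ (by omega))
      (hne _ _ _ _ (by omega))
      (W (Equiv.swap ⟨k, by omega⟩ ⟨k + 1, by omega⟩))
      (W (Equiv.swap ⟨k + 1, by omega⟩ ⟨k + 2, by omega⟩))
      (hWmul _) (hWmul _) (map_add _) (map_add _) (map_sub _) (map_sub _)
      ?_ ?_ ?_ (hWC _ _) (hWC _ _) (hWC _ _) (hWC _ _) ?_ ?_ ?_ ?_ ?_ ?_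
      (T k) (T (k + 1)) (hT' k (by omega)) (hT' (k + 1) (by omega)) p
    · intro p; rw [hWW, Equiv.swap_mul_self, hW1]
    · intro p; rw [hWW, Equiv.swap_mul_self, hW1]
    · intro p
      rw [hWW, hWW, hWW, hWW]
      congr 2
      have g1 := Equiv.swap_mul_swap_mul_swap e01 e02
      have g2 := Equiv.swap_mul_swap_mul_swap e12.symm e02.symm
      rw [Equiv.swap_comm (⟨k + 1, _⟩ : Fin n) ⟨k, _⟩,
        Equiv.swap_comm (⟨k + 2, _⟩ : Fin n) ⟨k + 1, _⟩] at g2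
      rw [g1, g2, Equiv.swap_comm]
    · rw [hWX, Equiv.swap_apply_left]
    · rw [hWX, Equiv.swap_apply_right]
    · rw [hWX, Equiv.swap_apply_of_ne_of_ne e02.symm e12.symm]
    · rw [hWX, Equiv.swap_apply_of_ne_of_ne e01 e02]
    · rw [hWX, Equiv.swap_apply_left]
    · rw [hWX, Equiv.swap_apply_right]
  have hcomm : ∀ j k, k + 1 < n → j + 1 < k → T j * T k = T k * T j := by
    intro j k hk hjk
    have e1 : (⟨k, by omega⟩ : Fin n) ≠ ⟨j, by omega⟩ := by simp; omega
    have e2 : (⟨k, by omega⟩ : Fin n) ≠ ⟨j + 1, by omega⟩ := by simp; omega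
    have e3 : (⟨k + 1, by omega⟩ : Fin n) ≠ ⟨j, by omega⟩ := by simp; omega
    have e4 : (⟨k + 1, by omega⟩ : Fin n) ≠ ⟨j + 1, by omega⟩ := by simp; omega
    refine LinearMap.ext fun p => ?_
    refine comm_dom (Xel ⟨j, by omega⟩) (Xel ⟨j + 1, by omega⟩) (Xel ⟨k, by omega⟩)
      (Xel ⟨k + 1, by omega⟩)
      (mono 0 τ) (mono 0 τ⁻¹) (hne _ _ _ _ (by omega)) (hne _ _ _ _ (by omega))
      (W (Equiv.swap ⟨j, by omega⟩ ⟨j + 1, by omega⟩))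
      (W (Equiv.swap ⟨k, by omega⟩ ⟨k + 1, by omega⟩))
      (hWmul _) (hWmul _) (map_add _) (map_add _) (map_sub _) (map_sub _)
      ?_ (hWC _ _) (hWC _ _) (hWC _ _) (hWC _ _) ?_ ?_ ?_ ?_
      (T j) (T k) (hT' j (by omega)) (hT' k (by omega)) p
    · intro p
      rw [hWW, hWW]
      congr 2
      have hm := Equiv.mul_swap_eq_swap_mul
        (Equiv.swap (⟨j, by omega⟩ : Fin n) ⟨j + 1, by omega⟩) ⟨k, by omega⟩ ⟨k + 1, by omega⟩
      rw [Equiv.swap_apply_of_ne_of_ne e1 e2, Equiv.swap_apply_of_ne_of_ne e3 e4] at hm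
      exact hm
    · rw [hWX, Equiv.swap_apply_of_ne_of_ne e1 e2]
    · rw [hWX, Equiv.swap_apply_of_ne_of_ne e3 e4]
    · rw [hWX, Equiv.swap_apply_of_ne_of_ne e1.symm e3.symm]
    · rw [hWX, Equiv.swap_apply_of_ne_of_ne e2.symm e4.symm]
  -- `T_k` commutes with `X_n⁻¹`
  have hTX : ∀ k, k + 2 < n → T k * XinvOp (n - 1) = XinvOp (n - 1) * T k := by
    intro k hk
    refine LinearMap.ext fun p => ?_
    have hlt : n - 1 < n := by omega
    have e1 : (⟨n - 1, hlt⟩ : Fin n) ≠ ⟨k, by omega⟩ := by simp; omega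
    have e2 : (⟨n - 1, hlt⟩ : Fin n) ≠ ⟨k + 1, by omega⟩ := by simp; omega
    rw [XinvOp, dif_pos hlt]
    change T k (XinvEl ⟨n - 1, hlt⟩ * p) = XinvEl ⟨n - 1, hlt⟩ * T k p
    apply mul_left_cancel₀ (hne (k + 1) k (by omega) (by omega) (by omega))
    have h1 := hT' k (by omega) p
    have h2 := hT' k (by omega) (XinvEl ⟨n - 1, hlt⟩ * p)
    rw [hWmul, hWXi, Equiv.swap_apply_of_ne_of_ne e1 e2] at h2
    linear_combination h2 - XinvEl ⟨n - 1, hlt⟩ * h1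
  -- `π⁻¹ T_{k+1} = T_k π⁻¹`
  have hpmul : ∀ p r, piInv (p * r) = piInv p * piInv r := by
    apply mul_of_mono
    intro a b c d
    rw [mono_mul, hpiInv, hpiInv, hpiInv, smul_mul_smul_comm, mono_mul, Finsupp.add_apply,
      zpow_add₀ hq]
    congr 2
    ext i; simp [Finsupp.equivMapDomain_apply]
  have hrot : ∀ (k : ℕ) (hk : k + 1 < n),
      (finRotate n).symm ⟨k + 1, hk⟩ = ⟨k, by omega⟩ := by
    intro k hk
    obtain ⟨m, rfl⟩ : ∃ m, n = m + 1 := ⟨n - 1, by omega⟩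
    rw [Equiv.symm_apply_eq, finRotate_of_lt (by omega)]
  have hpX : ∀ (k : ℕ) (hk : k + 1 < n), piInv (Xel ⟨k + 1, hk⟩) = Xel ⟨k, by omega⟩ := by
    intro k hk
    have h0 : (⟨k + 1, hk⟩ : Fin n) ≠ 0 := by
      intro h; have := congrArg Fin.val h; simp at this
    rw [Xel, hpiInv, Finsupp.equivMapDomain_single, hrot,
      Finsupp.single_eq_of_ne h0.symm, zpow_zero, one_smul]; rfl
  have hpC : ∀ c, piInv (mono 0 c) = mono 0 c := by
    intro c
    rw [hpiInv]
    simp only [Finsupp.coe_zero, Pi.zero_apply, zpow_zero, one_smul]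
    congr 1
  have hpi : ∀ k, k + 2 < n → piInv * T (k + 1) = T k * piInv := by
    intro k hk
    refine LinearMap.ext fun p => ?_
    change piInv (T (k + 1) p) = T k (piInv p)
    have hpW : piInv (W (Equiv.swap ⟨k + 1, by omega⟩ ⟨k + 2, by omega⟩) p)
        = W (Equiv.swap ⟨k, by omega⟩ ⟨k + 1, by omega⟩) (piInv p) := by
      have : piInv * W (Equiv.swap ⟨k + 1, by omega⟩ ⟨k + 2, by omega⟩)
        = W (Equiv.swap ⟨k, by omega⟩ ⟨k + 1, by omega⟩) * piInv := by
        apply lin_ext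
        intro a c
        have z1 : (0 : Fin n) ≠ ⟨k + 1, by omega⟩ := by
          intro h; have := congrArg Fin.val h; simp at this
        have z2 : (0 : Fin n) ≠ ⟨k + 2, by omega⟩ := by
          intro h; have := congrArg Fin.val h; simp at this
        rw [Module.End.mul_apply, Module.End.mul_apply, hW, hpiInv, hpiInv, map_smul, hW,
          Finsupp.equivMapDomain_apply, Equiv.symm_swap, Equiv.swap_apply_of_ne_of_ne z1 z2,
          ← Finsupp.equivMapDomain_trans, ← Finsupp.equivMapDomain_trans]
        congr 3
        have hm := Equiv.mul_swap_eq_swap_mul (finRotate n).symm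
          ⟨k + 1, by omega⟩ ⟨k + 2, by omega⟩
        rw [hrot, hrot] at hm
        exact hm
      exact LinearMap.congr_fun this p
    apply mul_left_cancel₀ (hne (k + 1) k (by omega) (by omega) (by omega))
    rw [hT' k (by omega), ← hpW]
    have h2 := congrArg piInv (hT' (k + 1) (by omega) p)
    simpa only [hpmul, map_add, map_sub, hpC, hpX k (by omega), hpX (k + 1) (by omega)] using h2
  -- inverse operators
  have hTiT : ∀ k x y, (x * Ti k = Ti y * x ↔ x * T k = T y * x) := by
    intro k x y
    rw [hTi, hTi, mul_add, add_mul, mul_smul_comm, smul_mul_assoc, mul_one, one_mul, add_left_inj]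
  have hcommi : ∀ j k, k + 1 < n → j + 1 < k → Ti j * Ti k = Ti k * Ti j := by
    intro j k hk hjk
    have h1 : Ti j * T k = T k * Ti j := by
      rw [hTi, add_mul, mul_add, hcomm j k hk hjk, mul_smul_comm, smul_mul_assoc, mul_one,
        one_mul]
    exact (hTiT k (Ti j) k).2 h1
  have hbraidi : ∀ k, k + 2 < n →
      Ti k * Ti (k + 1) * Ti k = Ti (k + 1) * Ti k * Ti (k + 1) := by
    intro k hk
    obtain ⟨h1, h2⟩ := hTinv k (by omega)
    obtain ⟨h3, h4⟩ := hTinv (k + 1) (by omega)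
    refine left_inv_eq_right_inv (a := T k * T (k + 1) * T k) ?_ ?_
    · calc _ = Ti k * (Ti (k + 1) * (Ti k * T k) * T (k + 1)) * T k := by simp only [mul_assoc]
        _ = 1 := by rw [h2, mul_one, h4, mul_one, h2]
    · rw [hbraid k hk]
      calc _ = T (k + 1) * (T k * (T (k + 1) * Ti (k + 1)) * Ti k) * Ti (k + 1) := by
            simp only [mul_assoc]
        _ = 1 := by rw [h3, mul_one, h1, mul_one, h3]
  -- `T_k` commutes with `Y_n`
  have hTY : ∀ k, k + 2 < n → T k * Y (n - 1) = Y (n - 1) * T k := by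
    intro k hk
    have h := aF_shift Ti n hbraidi hcommi (n - 1) 0 k (by omega) (by omega) (by omega)
    have h' := (hTiT k (aF Ti 0 (n - 1)) (k + 1)).1 h.symm
    have e : Y (n - 1) = piInv * aF Ti 0 (n - 1) := by
      rw [hY, Nat.sub_self]; simp [aF]
    rw [e, mul_assoc, h', ← mul_assoc, ← mul_assoc, hpi k hk]
  have hTYi : ∀ k, k + 2 < n → T k * Yi (n - 1) = Yi (n - 1) * T k := by
    intro k hk
    obtain ⟨h1, h2⟩ := hYinv (n - 1) (by omega)
    calc T k * Yi (n - 1) = Yi (n - 1) * Y (n - 1) * T k * Yi (n - 1) := by rw [h2, one_mul]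
      _ = Yi (n - 1) * (Y (n - 1) * T k) * Yi (n - 1) := by simp only [mul_assoc]
      _ = Yi (n - 1) * T k * (Y (n - 1) * Yi (n - 1)) := by
          rw [← hTY k hk]; simp only [mul_assoc]
      _ = _ := by rw [h1, mul_one]
  generalize hE : ((q - q⁻¹)⁻¹ • (XinvOp (n - 1) * (Y (n - 1) - Yi (n - 1))) :
    Module.End F (Laur F n)) = E at hD
  have hTE : ∀ k, k + 2 < n → T k * E = E * T k := by
    intro k hk
    rw [← hE, mul_smul_comm, smul_mul_assoc, ← mul_assoc, hTX k hk, mul_assoc, mul_assoc,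
      mul_sub, sub_mul, hTY k hk, hTYi k hk]
  constructor
  · intro k i hk hi hik hik1
    rw [hD]
    rcases lt_or_gt_of_ne hik with h | h
    · obtain ⟨k, rfl⟩ : ∃ m, k = m + 1 := ⟨k - 1, by omega⟩
      have h1 := aF_shift T n hbraid hcomm (n - 1 - i) i k (by omega) (by omega) (by omega)
      have h2 := dF_shift T n hbraid hcomm (n - 1 - i) i k (by omega) (by omega) (by omega)
      rw [← mul_assoc, ← mul_assoc, h1, mul_assoc _ (T k) E, hTE k (by omega), mul_assoc,
        mul_assoc, mul_assoc, h2]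
      simp only [mul_assoc]
    · have h1 := aF_comm T (T k) (n - 1 - i) i
        (fun j h3 h4 => hcomm k j (by omega) (by omega))
      have h2 := dF_comm T (T k) (n - 1 - i) i
        (fun j h3 h4 => hcomm k j (by omega) (by omega))
      rw [← mul_assoc, ← mul_assoc, h1, mul_assoc _ (T k) E, hTE k (by omega), mul_assoc,
        mul_assoc, mul_assoc, h2]
      simp only [mul_assoc]
  · intro k hk
    obtain ⟨h1, h2⟩ := hTinv k hk
    have e : n - 1 - k = (n - 1 - (k + 1)) + 1 := by omega
    rw [hD, hD, e, aF_succ, dF_succ]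
    calc _ = (Ti k * T k) * (aF T (k + 1) (n - 1 - (k + 1)) * E *
          dF T (k + 1) (n - 1 - (k + 1))) * (T k * Ti k) := by simp only [mul_assoc]
      _ = _ := by rw [h1, h2, one_mul, mul_one]
end
end
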